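/- Uniqueness for CGEDG: Let λ ∈ [1,2], α ≥ 0, φ ∈ Y⁺_{-α,λ}, and let K be a kernel satisfying K(x,y,z) ≤ x̂^{-α} ŷ^{-α} x̌^λ y̌^λ φ(z) for all x, y, z ≥ 0, and in addition, if α > 0, satisfying the bound (min(1, x−z))^{-α} K(x,y,z) ≤ C_α x̂^{-2α} ŷ^{-α} x̌^λ y̌^λ φ(z) for all x ≥ z ≥ 0 and some constant C_α > 0. Then for any initial datum c₀ ∈ Y⁺_{-2α,2λ} and any T ∈ (0,∞], there is at most one weak solution of CGEDG with kernel K and initial datum c₀ on [0,T) taking values in Y⁺_{-2α,2λ}. -/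

import Mathlib

open MeasureTheory Set Filter
open scoped ENNReal Topology

noncomputable section

/-- `x̂ := min 1 x` -/
def hatm (x : ℝ) : ℝ := min 1 x

/-- `x̌ := max 1 x` -/
def checkm (x : ℝ) : ℝ := max 1 x

/-- discrete Laplacian `(Δ_z f)(x) = f(x+z) - 2 f(x) + f(x-z)` -/
def dLap (f : ℝ → ℝ) (z x : ℝ) : ℝ := f (x + z) - 2 * f x + f (x - z)

/-- bounded measurable test function -/
def BddMeas (f : ℝ → ℝ) : Prop := Measurable f ∧ ∃ M : ℝ, ∀ x, |f x| ≤ M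

/-- the weighted L¹ norm `‖c‖_{-β,r} = ∫₀^∞ (x^{-β} + x^r) |c x| dx` -/
def Ynorm (β r : ℝ) (c : ℝ → ℝ) : ℝ :=
  ∫ x in Ioi (0:ℝ), (x ^ (-β) + x ^ r) * |c x|

/-- membership in the weighted space `Y_{-β,r}` -/
def MemY (β r : ℝ) (c : ℝ → ℝ) : Prop :=
  Measurable c ∧ IntegrableOn (fun x => (x ^ (-β) + x ^ r) * |c x|) (Ioi (0:ℝ))

/-- membership in the positive cone `Y⁺_{-β,r}` -/
def MemYplus (β r : ℝ) (c : ℝ → ℝ) : Prop :=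
  MemY β r c ∧ ∀ᵐ x ∂(volume.restrict (Ioi (0:ℝ))), 0 ≤ c x

/-- the moment `M_l(c) = ∫₀^∞ x^l c x dx` -/
def Mom (l : ℝ) (c : ℝ → ℝ) : ℝ := ∫ x in Ioi (0:ℝ), x ^ l * c x

/-- finiteness of the `l`-th moment -/
def MomFin (l : ℝ) (c : ℝ → ℝ) : Prop :=
  IntegrableOn (fun x => x ^ l * c x) (Ioi (0:ℝ))

/-- the mixed moment `M_{-α,λ}(c) = ∫₀^∞ x̂^{-α} x̌^λ c x dx` -/
def MomMix (a lam : ℝ) (c : ℝ → ℝ) : ℝ :=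
  ∫ x in Ioi (0:ℝ), hatm x ^ (-a) * checkm x ^ lam * c x

/-- `‖φ‖₀ = ∫₀^∞ φ` -/
def phiNorm0 (φ : ℝ → ℝ) : ℝ := ∫ z in Ioi (0:ℝ), φ z

/-- `‖φ‖_{0,r} = ∫₀^∞ (1 + z^r) φ(z) dz` -/
def phiNorm (r : ℝ) (φ : ℝ → ℝ) : ℝ := ∫ z in Ioi (0:ℝ), (1 + z ^ r) * φ z

/-- a kernel: measurable, nonnegative, symmetric in the first two arguments,
vanishing for `z > x` -/
structure IsKernel (K : ℝ → ℝ → ℝ → ℝ) : Prop where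
  meas : Measurable (fun p : ℝ × ℝ × ℝ => K p.1 p.2.1 p.2.2)
  nonneg : ∀ x y z, 0 ≤ K x y z
  symm : ∀ x y z, K x y z = K y x z
  vanish : ∀ x y z, x < z → K x y z = 0

/-- the domain `D = {(x,y,z) ∈ [0,∞)³ : x ≥ z, y ≥ z}` -/
def Dcgedg : Set (ℝ × ℝ × ℝ) :=
  {p | 0 ≤ p.1 ∧ 0 ≤ p.2.1 ∧ 0 ≤ p.2.2 ∧ p.2.2 ≤ p.1 ∧ p.2.2 ≤ p.2.1}

/-- weak solution of CGEDG with kernel `K`, initial datum `c₀` on `[0,T)`,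
taking values in `Y⁺_{-β,r}`.  Coordinates: `p = (s, x, y, z)`. -/
structure IsWeakSolution (K : ℝ → ℝ → ℝ → ℝ) (β r : ℝ) (T : ℝ≥0∞)
    (c₀ : ℝ → ℝ) (c : ℝ → ℝ → ℝ) : Prop where
  mem : ∀ t : ℝ, 0 ≤ t → ENNReal.ofReal t < T → MemYplus β r (c t)
  cont : ∀ f : ℝ → ℝ, BddMeas f →
    ContinuousOn (fun t => ∫ x in Ioi (0:ℝ), f x * c t x)
      {t : ℝ | 0 ≤ t ∧ ENNReal.ofReal t < T}
  bdd : ∃ C : ℝ, ∀ t : ℝ, 0 ≤ t → ENNReal.ofReal t < T → Ynorm β r (c t) ≤ C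
  integ : ∀ t : ℝ, 0 ≤ t → ENNReal.ofReal t < T →
    IntegrableOn (fun p : ℝ × ℝ × ℝ × ℝ =>
        K p.2.1 p.2.2.1 p.2.2.2 * c p.1 p.2.1 * c p.1 p.2.2.1)
      ((Ioc (0:ℝ) t) ×ˢ Dcgedg)
  weak : ∀ t : ℝ, 0 ≤ t → ENNReal.ofReal t < T → ∀ f : ℝ → ℝ, BddMeas f →
    (∫ x in Ioi (0:ℝ), f x * (c t x - c₀ x)) =
      ∫ p in (Ioc (0:ℝ) t) ×ˢ Dcgedg,
        dLap f p.2.2.2 p.2.1 *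
          (K p.2.1 p.2.2.1 p.2.2.2 * c p.1 p.2.1 * c p.1 p.2.2.1)

/-- the bound on the second derivative of the kernel in its first argument:
`∂₁² K(x,y,z) ≤ ŷ^{-α} y̌^λ φ(z)` for `x ≥ 0` (together with twice
differentiability in the first argument). -/
def SecondDerivBound (K : ℝ → ℝ → ℝ → ℝ) (a lam : ℝ) (φ : ℝ → ℝ) : Prop :=
  ∀ y z, 0 ≤ y → 0 ≤ z → ∀ x, 0 ≤ x →
    DifferentiableWithinAt ℝ (fun w => K w y z) (Ici 0) x ∧
    DifferentiableWithinAt ℝ (derivWithin (fun w => K w y z) (Ici 0)) (Ici 0) x ∧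
    derivWithin (derivWithin (fun w => K w y z) (Ici 0)) (Ici 0) x ≤
      hatm y ^ (-a) * checkm y ^ lam * φ z

/-- the singular bound `(min(1,x-z))^{-α} K(x,y,z) ≤ Cα x̂^{-2α} ŷ^{-α} x̌^λ y̌^λ φ(z)`
for `x ≥ z ≥ 0`. -/
def SingularBound (K : ℝ → ℝ → ℝ → ℝ) (a lam Ca : ℝ) (φ : ℝ → ℝ) : Prop :=
  ∀ x y z, 0 ≤ y → 0 ≤ z → z ≤ x →
    (min 1 (x - z)) ^ (-a) * K x y z ≤
      Ca * hatm x ^ (-(2*a)) * hatm y ^ (-a) * checkm x ^ lam * checkm y ^ lam * φ z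

/-- the global existence assumption (Assumption 1.3) with parameters `μ, ν, α` and
weight `φ`; here `λ = max μ ν`. -/
structure GlobalExistenceAssumption (K : ℝ → ℝ → ℝ → ℝ) (μ ν a : ℝ) (φ : ℝ → ℝ) :
    Prop where
  hμ : μ ∈ Icc (0:ℝ) 2
  hν : ν ∈ Icc (0:ℝ) 2
  hμν : μ + ν ≤ 3
  hlam : 1 < max μ ν
  ha : 0 ≤ a
  hφ : MemYplus (2*a) (2 * max μ ν) φ
  growth : ∀ x y z, 0 ≤ x → 0 ≤ y → 0 ≤ z →
    K x y z ≤ hatm x ^ (-a) * hatm y ^ (-a) *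
      ((checkm x ^ μ * checkm y ^ ν + checkm x ^ ν * checkm y ^ μ) / 2) * φ z
  deriv2 : SecondDerivBound K a (max μ ν) φ
  sing : 0 < a → ∃ Ca > 0, SingularBound K a (max μ ν) Ca φ

/-- the gelation time of a solution on `[0,T)`:
`T_gel = sup { t ∈ [0,T) : M₂(c_t) < ∞ }` (as an extended real). -/
def gelTime (T : ℝ≥0∞) (c : ℝ → ℝ → ℝ) : ℝ≥0∞ :=
  sSup {s : ℝ≥0∞ | ∃ t : ℝ, s = ENNReal.ofReal t ∧ 0 ≤ t ∧
    ENNReal.ofReal t < T ∧ MomFin 2 (c t)}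

/-- the truncated kernel `K_n` -/
def Ktrunc (K : ℝ → ℝ → ℝ → ℝ) (n : ℕ) (x y z : ℝ) : ℝ :=
  if (1/(n:ℝ) < x ∧ x < n) ∧ (1/(n:ℝ) < y ∧ y < n) ∧ (1/(n:ℝ) < z ∧ z < n) ∧
     (0 < x + z ∧ x + z < n) ∧ (0 < y + z ∧ y + z < n) ∧
     1/(n:ℝ) < x - z ∧ 1/(n:ℝ) < y - z
  then K x y z else 0

/-- the right-hand side of the truncated system; coordinates `p = (z, y)`. -/
def truncRHS (K : ℝ → ℝ → ℝ → ℝ) (n : ℕ) (c : ℝ → ℝ) (x : ℝ) : ℝ :=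
  (∫ p in (Ioi (0:ℝ)) ×ˢ (Ioi (0:ℝ)),
      Ktrunc K n p.2 (x - p.1) p.1 * c p.2 * c (x - p.1))
  - (∫ p in (Ioi (0:ℝ)) ×ˢ (Ioi (0:ℝ)),
      Ktrunc K n x p.2 p.1 * c x * c p.2)
  - (∫ p in (Ioi (0:ℝ)) ×ˢ (Ioi (0:ℝ)),
      Ktrunc K n p.2 x p.1 * c p.2 * c x)
  + (∫ p in (Ioi (0:ℝ)) ×ˢ (Ioi (0:ℝ)),
      Ktrunc K n (x + p.1) p.2 p.1 * c (x + p.1) * c p.2)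

/-- classical solution of the truncated system on `L¹((1/n,n))`, extended by zero
outside `(1/n, n)`. -/
structure IsTruncatedSolution (K : ℝ → ℝ → ℝ → ℝ) (n : ℕ) (c : ℝ → ℝ → ℝ) :
    Prop where
  meas : ∀ t : ℝ, Measurable (c t)
  zero_outside : ∀ t : ℝ, ∀ x, x ∉ Ioo (1/(n:ℝ)) (n:ℝ) → c t x = 0
  integrable : ∀ t : ℝ, 0 ≤ t → IntegrableOn (c t) (Ioo (1/(n:ℝ)) (n:ℝ))
  ode : ∀ x ∈ Ioo (1/(n:ℝ)) (n:ℝ), ∀ t : ℝ, 0 ≤ t →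
    HasDerivWithinAt (fun s => c s x) (truncRHS K n (c t) x) (Ici 0) t

/-- de la Vallée-Poussin class `C_VP` -/
structure IsCVP (σ : ℝ → ℝ) : Prop where
  contDiff : ContDiffOn ℝ 2 σ (Ici 0)
  nonneg : ∀ x, 0 ≤ x → 0 ≤ σ x
  convex : ConvexOn ℝ (Ici 0) σ
  zero : σ 0 = 0
  deriv_zero : derivWithin σ (Ici 0) 0 = 0
  deriv_concave : ConcaveOn ℝ (Ici 0) (derivWithin σ (Ici 0))
  deriv_pos : ∀ x, 0 < x → 0 < derivWithin σ (Ici 0) x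
  deriv_top : Tendsto (derivWithin σ (Ici 0)) atTop atTop
  slope_top : Tendsto (fun x => σ x / x) atTop atTop

/-!
Let `w x = x ^ (-α) + x ^ λ` and let `c`, `d` be two solutions bounded in `L¹` with weight `w ^ 2`.
The equation for `c - d` is tested against `sgn (c_t - d_t) * min w n`. Written as a sum of three
terms, the right-hand side has only one in which the Laplacian falls on `c - d` itself; there the
sign turns it into the Laplacian of the weight, which the kernel bounds control without the second
power of `w`. The sign is frozen at the end point `t` of a short time interval. This costs little:
time increments are Lipschitz in `L¹` and bounded with weight `w ^ 2`, hence `½`-Hölder with weight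
`w` by interpolation. Grönwall's inequality bounds the truncated norm of `c_t - d_t` by `O(1 / n)`,
and `n → ∞` concludes.
-/

local notation "μ₊" => Measure.restrict (volume : Measure ℝ) (Ioi (0 : ℝ))

section WeightedNorm

variable {α : Type*} [MeasurableSpace α] {μ : Measure α} {v w g h : α → ℝ}

/-- The weighted norm `∫ w |g| dμ`; `Ynorm` is the instance with weight `x ^ (-β) + x ^ r`. -/
def weightedNorm (μ : Measure α) (w g : α → ℝ) : ℝ := ∫ x, w x * |g x| ∂μ

/-- Membership in the weighted `L¹` space whose norm is `weightedNorm μ w`. As in `MemY`, elements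
are measurable functions rather than almost everywhere classes. -/
structure MemWeightedL1 (μ : Measure α) (w g : α → ℝ) : Prop where
  measurable : Measurable g
  integrable_mul_abs : Integrable (fun x => w x * |g x|) μ

lemma weightedNorm_nonneg (hw : ∀ x, 0 ≤ w x) (g : α → ℝ) : 0 ≤ weightedNorm μ w g :=
  integral_nonneg fun x => mul_nonneg (hw x) (abs_nonneg _)

namespace MemWeightedL1

lemma of_abs_le (hg : MemWeightedL1 μ w g) (hv : Measurable v) (hvw : ∀ᵐ x ∂μ, |v x| ≤ w x) :
    MemWeightedL1 μ v g := by
  refine ⟨hg.measurable, hg.integrable_mul_abs.mono' ?_ ?_⟩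
  · exact (hv.mul hg.measurable.abs).aestronglyMeasurable
  · filter_upwards [hvw] with x hx
    rw [Real.norm_eq_abs, abs_mul, abs_abs]
    exact mul_le_mul_of_nonneg_right hx (abs_nonneg _)

lemma integrable (hg : MemWeightedL1 μ w g) (hw : ∀ᵐ x ∂μ, 1 ≤ w x) : Integrable g μ := by
  have h1 : MemWeightedL1 μ 1 g := hg.of_abs_le measurable_one (by simpa using hw)
  refine h1.integrable_mul_abs.mono' hg.measurable.aestronglyMeasurable ?_
  exact Eventually.of_forall fun x => by simp

lemma sub (hw : Measurable w) (hg : MemWeightedL1 μ w g) (hh : MemWeightedL1 μ w h) :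
    MemWeightedL1 μ w (g - h) := by
  have hgh := hg.measurable.sub hh.measurable
  refine ⟨hgh, (hg.integrable_mul_abs.norm.add hh.integrable_mul_abs.norm).mono'
    (hw.mul hgh.abs).aestronglyMeasurable (Eventually.of_forall fun x => ?_)⟩
  simp only [Pi.sub_apply, Pi.add_apply, norm_mul, Real.norm_eq_abs, abs_abs, ← mul_add]
  exact mul_le_mul_of_nonneg_left (abs_sub _ _) (abs_nonneg _)

end MemWeightedL1

lemma weightedNorm_mono (hv : MemWeightedL1 μ v g) (hw : MemWeightedL1 μ w g)
    (hvw : ∀ᵐ x ∂μ, v x ≤ w x) : weightedNorm μ v g ≤ weightedNorm μ w g :=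
  integral_mono_ae hv.integrable_mul_abs hw.integrable_mul_abs <|
    hvw.mono fun _ hx => mul_le_mul_of_nonneg_right hx (abs_nonneg _)

lemma weightedNorm_sub_comm (w g h : α → ℝ) :
    weightedNorm μ w (g - h) = weightedNorm μ w (h - g) := by
  simp only [weightedNorm, Pi.sub_apply, abs_sub_comm]

lemma weightedNorm_sub_le (hw : ∀ x, 0 ≤ w x) (hwm : Measurable w) (hg : MemWeightedL1 μ w g)
    (hh : MemWeightedL1 μ w h) :
    weightedNorm μ w (g - h) ≤ weightedNorm μ w g + weightedNorm μ w h := by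
  rw [weightedNorm, weightedNorm, weightedNorm,
    ← integral_add hg.integrable_mul_abs hh.integrable_mul_abs]
  refine integral_mono (hg.sub hwm hh).integrable_mul_abs
    (hg.integrable_mul_abs.add hh.integrable_mul_abs) fun x => ?_
  rw [Pi.sub_apply, ← mul_add]
  exact mul_le_mul_of_nonneg_left (abs_sub _ _) (hw x)

lemma abs_weightedNorm_sub_weightedNorm_le (hw : ∀ x, 0 ≤ w x) (hwm : Measurable w)
    (hg : MemWeightedL1 μ w g) (hh : MemWeightedL1 μ w h) :
    |weightedNorm μ w g - weightedNorm μ w h| ≤ weightedNorm μ w (g - h) := by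
  rw [weightedNorm, weightedNorm, ← integral_sub hg.integrable_mul_abs hh.integrable_mul_abs]
  refine abs_integral_le_integral_abs.trans (integral_mono
    (hg.integrable_mul_abs.sub hh.integrable_mul_abs).abs (hg.sub hwm hh).integrable_mul_abs
    fun x => ?_)
  simp only [Pi.sub_apply, ← mul_sub, abs_mul, abs_of_nonneg (hw x)]
  exact mul_le_mul_of_nonneg_left (abs_abs_sub_abs_le _ _) (hw x)

namespace MemWeightedL1

lemma of_sq (hg : MemWeightedL1 μ (w ^ 2) g) (hwm : Measurable w) (hw1 : ∀ᵐ x ∂μ, 1 ≤ w x) :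
    MemWeightedL1 μ w g := by
  refine hg.of_abs_le hwm (hw1.mono fun x hx => ?_)
  rw [abs_of_nonneg (zero_le_one.trans hx)]
  exact le_self_pow₀ hx two_ne_zero

lemma min_const (hg : MemWeightedL1 μ w g) (hwm : Measurable w) (hw : ∀ x, 0 ≤ w x) {n : ℝ}
    (hn : 0 ≤ n) : MemWeightedL1 μ (fun x => min (w x) n) g := by
  refine hg.of_abs_le (hwm.min measurable_const) (Eventually.of_forall fun x => ?_)
  rw [abs_of_nonneg (le_min (hw x) hn)]
  exact min_le_left _ _

end MemWeightedL1

lemma weightedNorm_one : weightedNorm μ 1 g = ∫ x, |g x| ∂μ := by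
  simp only [weightedNorm, Pi.one_apply, one_mul]

/-- Cauchy–Schwarz, from the nonnegativity of `∫ (s w - 1)² |g|` for every real `s`. -/
lemma sq_weightedNorm_le (hwm : Measurable w) (hw1 : ∀ᵐ x ∂μ, 1 ≤ w x)
    (hg : MemWeightedL1 μ (w ^ 2) g) :
    weightedNorm μ w g ^ 2 ≤ weightedNorm μ 1 g * weightedNorm μ (w ^ 2) g := by
  have hg1 := hg.of_sq hwm hw1
  have hquad (s : ℝ) : 0 ≤ weightedNorm μ (w ^ 2) g * (s * s) + -2 * weightedNorm μ w g * s
      + weightedNorm μ 1 g := by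
    have h2 : Integrable (fun x => s * s * ((w ^ 2) x * |g x|)) μ :=
      hg.integrable_mul_abs.const_mul _
    have h1 : Integrable (fun x => 2 * s * (w x * |g x|)) μ := hg1.integrable_mul_abs.const_mul _
    have h21 : Integrable (fun x => s * s * ((w ^ 2) x * |g x|) - 2 * s * (w x * |g x|)) μ :=
      h2.sub h1
    calc 0 ≤ ∫ x, (s * w x - 1) ^ 2 * |g x| ∂μ := integral_nonneg fun x => by positivity
      _ = ∫ x, (s * s * ((w ^ 2) x * |g x|) - 2 * s * (w x * |g x|)) + |g x| ∂μ := by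
        congr 1 with x
        rw [Pi.pow_apply]
        ring
      _ = _ := by
        rw [integral_add h21 (hg1.integrable hw1).abs, integral_sub h2 h1, integral_const_mul,
          integral_const_mul, weightedNorm_one, weightedNorm, weightedNorm]
        ring
  have hdiscr := discrim_le_zero hquad
  rw [discrim] at hdiscr
  linarith

lemma weightedNorm_le_min_add (hwm : Measurable w) (hw : ∀ x, 0 ≤ w x)
    (hw1 : ∀ᵐ x ∂μ, 1 ≤ w x) (hg : MemWeightedL1 μ (w ^ 2) g) {n : ℝ} (hn : 0 < n) :
    weightedNorm μ w g ≤
      weightedNorm μ (fun x => min (w x) n) g + weightedNorm μ (w ^ 2) g / n := by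
  have hg1 := hg.of_sq hwm hw1
  have hgn := (hg1.min_const hwm hw hn.le).integrable_mul_abs
  have hg2 := hg.integrable_mul_abs.div_const n
  simp only [weightedNorm, ← integral_div]
  rw [← integral_add hgn hg2]
  refine integral_mono hg1.integrable_mul_abs (hgn.add hg2) fun x => ?_
  have hx : w x ≤ min (w x) n + w x ^ 2 / n := by
    rcases le_total (w x) n with h | h
    · rw [min_eq_left h]
      exact le_add_of_nonneg_right (by positivity)
    · rw [min_eq_right h]
      have : w x ≤ w x ^ 2 / n := by
        rw [le_div_iff₀ hn, sq]
        exact mul_le_mul_of_nonneg_left h (hw x)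
      linarith
  calc w x * |g x| ≤ (min (w x) n + w x ^ 2 / n) * |g x| := by gcongr
    _ = min (w x) n * |g x| + (w ^ 2) x * |g x| / n := by rw [Pi.pow_apply]; ring

lemma ae_eq_of_weightedNorm_sub_eq_zero (hw : ∀ x, 0 ≤ w x) (hw1 : ∀ᵐ x ∂μ, 1 ≤ w x)
    (hgh : MemWeightedL1 μ w (g - h)) (h0 : weightedNorm μ w (g - h) = 0) : g =ᵐ[μ] h := by
  have hzero := (integral_eq_zero_iff_of_nonneg (fun x => mul_nonneg (hw x) (abs_nonneg _))
    hgh.integrable_mul_abs).1 h0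
  filter_upwards [hzero, hw1] with x hx hx1
  have : g x - h x = 0 := by
    simpa [(zero_lt_one.trans_le hx1).ne'] using hx
  linarith

end WeightedNorm

section SignTest

lemma abs_sign_le_one (r : ℝ) : |(SignType.sign r : ℝ)| ≤ 1 := by
  cases SignType.sign r <;> simp

lemma measurable_sign : Measurable fun r : ℝ => (SignType.sign r : ℝ) := by
  have hite (r : ℝ) : (SignType.sign r : ℝ) = if 0 < r then 1 else if r < 0 then -1 else 0 := by
    rw [sign_apply]
    split_ifs <;> simp
  simp only [hite]
  exact measurable_const.ite measurableSet_Ioi (measurable_const.ite measurableSet_Iio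
    measurable_const)

/-- The function `sgn(g) m`. Testing the equation for `g` against it produces the norm of `g` with
weight `m`. -/
def signTest (g m : ℝ → ℝ) (x : ℝ) : ℝ := SignType.sign (g x) * m x

variable {g m : ℝ → ℝ}

lemma abs_signTest_le (hm : ∀ x, 0 ≤ m x) (x : ℝ) : |signTest g m x| ≤ m x := by
  rw [signTest, abs_mul, abs_of_nonneg (hm x)]
  exact mul_le_of_le_one_left (hm x) (abs_sign_le_one _)

lemma bddMeas_signTest (hg : Measurable g) (hm : BddMeas m) : BddMeas (signTest g m) := by
  obtain ⟨hmeas, M, hM⟩ := hm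
  refine ⟨(measurable_sign.comp hg).mul hmeas, M, fun x => ?_⟩
  rw [signTest, abs_mul]
  exact (mul_le_of_le_one_left (abs_nonneg _) (abs_sign_le_one _)).trans (hM x)

lemma BddMeas.integrable_mul {μ : Measure ℝ} (hm : BddMeas m) (hg : Integrable g μ) :
    Integrable (fun x => m x * g x) μ := by
  obtain ⟨hmeas, M, hM⟩ := hm
  exact hg.bdd_mul hmeas.aestronglyMeasurable (Eventually.of_forall hM)

lemma signTest_mul_self (g m : ℝ → ℝ) (x : ℝ) : signTest g m x * g x = m x * |g x| := by
  rw [signTest, mul_right_comm, sign_mul_self, mul_comm]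

lemma integral_signTest_mul_self (μ : Measure ℝ) (g m : ℝ → ℝ) :
    ∫ x, signTest g m x * g x ∂μ = weightedNorm μ m g := by
  simp only [signTest_mul_self, weightedNorm]

lemma integral_signTest_mul_le {μ : Measure ℝ} {h : ℝ → ℝ} (hm0 : ∀ x, 0 ≤ m x) (hm : BddMeas m)
    (hg : Measurable g) (hh : Integrable h μ) :
    ∫ x, signTest g m x * h x ∂μ ≤ weightedNorm μ m h := by
  refine integral_mono ((bddMeas_signTest hg hm).integrable_mul hh) (hm.integrable_mul hh.abs)
    fun x => (le_abs_self _).trans ?_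
  rw [abs_mul]
  exact mul_le_mul_of_nonneg_right (abs_signTest_le hm0 x) (abs_nonneg _)

lemma dLap_signTest_mul_le (hm : ∀ x, 0 ≤ m x) (z x : ℝ) :
    dLap (signTest g m) z x * g x ≤ dLap m z x * |g x| := by
  have hle (y : ℝ) : signTest g m y * g x ≤ m y * |g x| :=
    (le_abs_self _).trans <| by
      rw [abs_mul]
      exact mul_le_mul_of_nonneg_right (abs_signTest_le hm y) (abs_nonneg _)
  simp only [dLap]
  linarith [hle (x + z), signTest_mul_self g m x, hle (x - z)]

end SignTest

section DiscreteLaplacian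

variable {f w : ℝ → ℝ}

lemma measurable_dLap (hf : Measurable f) :
    Measurable fun p : ℝ × ℝ × ℝ => dLap f p.2.2 p.1 := by
  unfold dLap
  fun_prop

lemma abs_dLap_le (f : ℝ → ℝ) (z x : ℝ) :
    |dLap f z x| ≤ |f (x + z)| + 2 * |f x| + |f (x - z)| := by
  refine (abs_add_le _ _).trans (add_le_add_left ((abs_sub _ _).trans ?_) _)
  rw [abs_mul, abs_two]

lemma abs_dLap_le_of_abs_le_const {M : ℝ} (hf : ∀ x, |f x| ≤ M) (z x : ℝ) :
    |dLap f z x| ≤ 4 * M := by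
  linarith [abs_dLap_le f z x, hf (x + z), hf x, hf (x - z)]

lemma abs_dLap_le_of_abs_le (hf : ∀ x, |f x| ≤ w x) (z x : ℝ) :
    |dLap f z x| ≤ dLap w z x + 4 * w x := by
  refine (abs_dLap_le f z x).trans ?_
  rw [dLap]
  linarith [hf (x + z), hf x, hf (x - z)]

lemma dLap_min_const_le (w : ℝ → ℝ) (n z x : ℝ) :
    dLap (fun y => min (w y) n) z x ≤ max 0 (dLap w z x) := by
  simp only [dLap]
  rcases le_total (w x) n with h | h
  · refine le_max_of_le_right ?_
    rw [min_eq_left h]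
    linarith [min_le_left (w (x + z)) n, min_le_left (w (x - z)) n]
  · refine le_max_of_le_left ?_
    rw [min_eq_right h]
    linarith [min_le_right (w (x + z)) n, min_le_right (w (x - z)) n]

end DiscreteLaplacian

section Gronwall

lemma le_gronwallBound_of_sub_le {H ω : ℝ → ℝ} {δ C ε a b : ℝ} (hH : ContinuousOn H (Icc a b))
    (ha : H a ≤ δ) (hω : Tendsto ω (𝓝[>] 0) (𝓝 0))
    (hsub : ∀ s ∈ Ico a b, ∀ t ∈ Ioc s b, H t - H s ≤ (t - s) * (C * H s + ε + ω (t - s))) :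
    ∀ t ∈ Icc a b, H t ≤ gronwallBound δ C ε (t - a) := by
  refine le_gronwallBound_of_liminf_deriv_right_le (f' := fun s => C * H s + ε) hH
    (fun s hs r hr => Eventually.frequently ?_) ha fun _ _ => le_rfl
  have hshift : Tendsto (fun t => t - s) (𝓝[>] s) (𝓝[>] 0) := by
    refine tendsto_nhdsWithin_iff.2 ⟨?_, ?_⟩
    · exact ((continuous_sub_right s).tendsto' s 0 (sub_self s)).mono_left nhdsWithin_le_nhds
    · exact eventually_nhdsWithin_of_forall fun _ ht => sub_pos.2 (mem_Ioi.1 ht)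
  have hsmall : ∀ᶠ t in 𝓝[>] s, ω (t - s) < r - (C * H s + ε) :=
    (hω.comp hshift).eventually_lt_const (sub_pos.2 hr)
  filter_upwards [hsmall, Ioc_mem_nhdsGT hs.2] with t htω ht
  have hts : 0 < t - s := sub_pos.2 ht.1
  calc (t - s)⁻¹ * (H t - H s)
      ≤ (t - s)⁻¹ * ((t - s) * (C * H s + ε + ω (t - s))) := by
        gcongr
        exact hsub s hs t ht
    _ = C * H s + ε + ω (t - s) := inv_mul_cancel_left₀ hts.ne' _
    _ < r := by linarith

end Gronwall

section Domain

lemma volume_restrict_Dcgedg_le :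
    (volume : Measure (ℝ × ℝ × ℝ)).restrict Dcgedg ≤ (μ₊).prod ((μ₊).prod μ₊) := by
  have hIci : (volume : Measure ℝ).restrict (Ici 0) = μ₊ :=
    Measure.restrict_congr_set Ioi_ae_eq_Ici.symm
  rw [← hIci, Measure.prod_restrict, Measure.prod_restrict, ← Measure.volume_eq_prod,
    ← Measure.volume_eq_prod]
  have hsub : Dcgedg ⊆ Ici 0 ×ˢ Ici 0 ×ˢ Ici 0 := fun p hp => ⟨hp.1, hp.2.1, hp.2.2.1⟩
  exact Measure.restrict_mono hsub le_rfl

lemma measurableSet_Dcgedg : MeasurableSet Dcgedg :=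
  (measurableSet_le measurable_const measurable_fst).inter <|
    (measurableSet_le measurable_const (measurable_fst.comp measurable_snd)).inter <|
      (measurableSet_le measurable_const (measurable_snd.comp measurable_snd)).inter <|
        (measurableSet_le (measurable_snd.comp measurable_snd) measurable_fst).inter <|
          measurableSet_le (measurable_snd.comp measurable_snd) (measurable_fst.comp measurable_snd)

lemma ae_Dcgedg_of_ae {P : ℝ → Prop} (hP : ∀ᵐ y ∂μ₊, P y) :
    ∀ᵐ p ∂(volume : Measure (ℝ × ℝ × ℝ)).restrict Dcgedg, P p.2.1 :=
  ae_mono volume_restrict_Dcgedg_le <|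
    (Measure.quasiMeasurePreserving_fst.comp Measure.quasiMeasurePreserving_snd).ae hP

lemma ae_Dcgedg_pos :
    ∀ᵐ p ∂(volume : Measure (ℝ × ℝ × ℝ)).restrict Dcgedg, 0 < p.2.1 ∧ 0 < p.2.2 ∧ p.2.2 ≤ p.1 := by
  have hpos : ∀ᵐ z ∂μ₊, 0 < z := ae_restrict_mem measurableSet_Ioi
  filter_upwards [ae_Dcgedg_of_ae hpos, ae_restrict_mem measurableSet_Dcgedg,
    ae_mono volume_restrict_Dcgedg_le ((Measure.quasiMeasurePreserving_snd.comp
      Measure.quasiMeasurePreserving_snd).ae hpos)] with p hy hp hz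
  exact ⟨hy, hz, hp.2.2.2.1⟩

end Domain

section DominatedKernel

/-- A kernel dominated by a weight `w` and an integrable profile `Φ`, both on its own and when
multiplied by the discrete Laplacian of the weight. The weight is defined on `ℝ` so that its
truncations are bounded test functions. -/
structure IsDominatedKernel (K : ℝ → ℝ → ℝ → ℝ) (w Φ : ℝ → ℝ) : Prop where
  measurable_kernel : Measurable fun p : ℝ × ℝ × ℝ => K p.1 p.2.1 p.2.2
  kernel_nonneg : ∀ x y z, 0 ≤ K x y z
  measurable_weight : Measurable w
  weight_nonneg : ∀ x, 0 ≤ w x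
  one_le_weight : ∀ x, 0 < x → 1 ≤ w x
  integrable_profile : Integrable Φ μ₊
  kernel_le : ∀ x y z, 0 < y → 0 < z → z ≤ x → K x y z ≤ w x * w y * Φ z
  kernel_mul_dLap_le : ∀ x y z, 0 < y → 0 < z → z ≤ x →
    K x y z * dLap w z x ≤ w x * w y * Φ z

/-- The trilinear form of the weak formulation: a solution satisfies
`d/dt ∫ f c = exchangeForm K f c c`. -/
def exchangeForm (K : ℝ → ℝ → ℝ → ℝ) (f g h : ℝ → ℝ) : ℝ :=
  ∫ p in Dcgedg, dLap f p.2.2 p.1 * (K p.1 p.2.1 p.2.2 * g p.1 * h p.2.1)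

namespace IsDominatedKernel

variable {K : ℝ → ℝ → ℝ → ℝ} {w Φ f g g' h h' v : ℝ → ℝ}

lemma ae_one_le_weight (hK : IsDominatedKernel K w Φ) : ∀ᵐ x ∂μ₊, 1 ≤ w x :=
  (ae_restrict_mem measurableSet_Ioi).mono hK.one_le_weight

lemma profile_nonneg (hK : IsDominatedKernel K w Φ) {z : ℝ} (hz : 0 < z) : 0 ≤ Φ z := by
  have hw : 0 < w z := zero_lt_one.trans_le (hK.one_le_weight z hz)
  exact nonneg_of_mul_nonneg_right
    ((hK.kernel_nonneg z z z).trans (hK.kernel_le z z z hz hz le_rfl)) (mul_pos hw hw)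

lemma phiNorm0_nonneg (hK : IsDominatedKernel K w Φ) : 0 ≤ phiNorm0 Φ :=
  setIntegral_nonneg measurableSet_Ioi fun _ hz => hK.profile_nonneg hz

lemma bddMeas_min_weight (hK : IsDominatedKernel K w Φ) {n : ℝ} (hn : 0 ≤ n) :
    BddMeas fun x => min (w x) n := by
  refine ⟨hK.measurable_weight.min measurable_const, n, fun x => ?_⟩
  rw [abs_of_nonneg (le_min (hK.weight_nonneg x) hn)]
  exact min_le_right _ _

lemma kernel_mul_dLap_min_le (hK : IsDominatedKernel K w Φ) (n : ℝ) {x y z : ℝ} (hy : 0 < y)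
    (hz : 0 < z) (hzx : z ≤ x) :
    K x y z * dLap (fun x => min (w x) n) z x ≤ w x * w y * Φ z := by
  calc K x y z * dLap (fun x => min (w x) n) z x
      ≤ K x y z * max 0 (dLap w z x) :=
        mul_le_mul_of_nonneg_left (dLap_min_const_le w n z x) (hK.kernel_nonneg x y z)
    _ = max 0 (K x y z * dLap w z x) := by
        rw [mul_max_of_nonneg _ _ (hK.kernel_nonneg x y z), mul_zero]
    _ ≤ w x * w y * Φ z := max_le ((hK.kernel_nonneg x y z).trans (hK.kernel_le x y z hy hz hzx))
        (hK.kernel_mul_dLap_le x y z hy hz hzx)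

lemma abs_dLap_mul_kernel_le (hK : IsDominatedKernel K w Φ) (hf : ∀ x, |f x| ≤ w x) {x y z : ℝ}
    (hy : 0 < y) (hz : 0 < z) (hzx : z ≤ x) :
    |dLap f z x| * K x y z ≤ 5 * ((w ^ 2) x * w y * Φ z) := by
  have hw : 1 ≤ w x := hK.one_le_weight x (hz.trans_le hzx)
  have hyz : 0 ≤ w y * Φ z := mul_nonneg (hK.weight_nonneg y) (hK.profile_nonneg hz)
  calc |dLap f z x| * K x y z ≤ (dLap w z x + 4 * w x) * K x y z :=
        mul_le_mul_of_nonneg_right (abs_dLap_le_of_abs_le hf z x) (hK.kernel_nonneg x y z)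
    _ = K x y z * dLap w z x + 4 * (w x * K x y z) := by ring
    _ ≤ w x * w y * Φ z + 4 * (w x * (w x * w y * Φ z)) :=
        add_le_add (hK.kernel_mul_dLap_le x y z hy hz hzx) <| mul_le_mul_of_nonneg_left
          (mul_le_mul_of_nonneg_left (hK.kernel_le x y z hy hz hzx) (hK.weight_nonneg x))
          zero_le_four
    _ ≤ 5 * ((w ^ 2) x * w y * Φ z) := by
        rw [Pi.pow_apply]
        nlinarith [mul_le_mul_of_nonneg_right (le_self_pow₀ hw two_ne_zero) hyz]

lemma integrable_dominant (hK : IsDominatedKernel K w Φ) (hg : MemWeightedL1 μ₊ v g)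
    (hh : MemWeightedL1 μ₊ w h) :
    Integrable (fun p : ℝ × ℝ × ℝ => v p.1 * |g p.1| * (w p.2.1 * |h p.2.1| * Φ p.2.2))
      ((μ₊).prod ((μ₊).prod μ₊)) :=
  hg.integrable_mul_abs.mul_prod (hh.integrable_mul_abs.mul_prod hK.integrable_profile)

lemma integrable_exchange (hK : IsDominatedKernel K w Φ) (hf : BddMeas f)
    (hg : MemWeightedL1 μ₊ w g) (hh : MemWeightedL1 μ₊ w h) :
    IntegrableOn (fun p : ℝ × ℝ × ℝ =>
      dLap f p.2.2 p.1 * (K p.1 p.2.1 p.2.2 * g p.1 * h p.2.1)) Dcgedg := by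
  obtain ⟨hfm, M, hM⟩ := hf
  refine (((hK.integrable_dominant hg hh).mono_measure volume_restrict_Dcgedg_le).const_mul
    (4 * M)).mono' ?_ ?_
  · exact ((measurable_dLap hfm).mul ((hK.measurable_kernel.mul (hg.measurable.comp
      measurable_fst)).mul (hh.measurable.comp (measurable_fst.comp
        measurable_snd)))).aestronglyMeasurable
  · filter_upwards [ae_Dcgedg_pos] with p ⟨hy, hz, hzx⟩
    simp only [Real.norm_eq_abs, abs_mul, abs_of_nonneg (hK.kernel_nonneg _ _ _)]
    calc |dLap f p.2.2 p.1| * (K p.1 p.2.1 p.2.2 * |g p.1| * |h p.2.1|)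
        ≤ 4 * M * (w p.1 * w p.2.1 * Φ p.2.2 * |g p.1| * |h p.2.1|) := by
          gcongr
          · exact mul_nonneg (mul_nonneg (hK.kernel_nonneg _ _ _) (abs_nonneg _)) (abs_nonneg _)
          · exact mul_nonneg zero_le_four ((abs_nonneg (f 0)).trans (hM 0))
          · exact abs_dLap_le_of_abs_le_const hM _ _
          · exact hK.kernel_le _ _ _ hy hz hzx
      _ = _ := by ring

lemma exchangeForm_sub_left (hK : IsDominatedKernel K w Φ) (hf : BddMeas f)
    (hg : MemWeightedL1 μ₊ w g) (hg' : MemWeightedL1 μ₊ w g') (hh : MemWeightedL1 μ₊ w h) :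
    exchangeForm K f (g - g') h = exchangeForm K f g h - exchangeForm K f g' h := by
  rw [exchangeForm, exchangeForm, exchangeForm, ← integral_sub (hK.integrable_exchange hf hg hh)
    (hK.integrable_exchange hf hg' hh)]
  simp only [Pi.sub_apply, mul_sub, sub_mul]

lemma exchangeForm_sub_right (hK : IsDominatedKernel K w Φ) (hf : BddMeas f)
    (hg : MemWeightedL1 μ₊ w g) (hh : MemWeightedL1 μ₊ w h) (hh' : MemWeightedL1 μ₊ w h') :
    exchangeForm K f g (h - h') = exchangeForm K f g h - exchangeForm K f g h' := by
  rw [exchangeForm, exchangeForm, exchangeForm, ← integral_sub (hK.integrable_exchange hf hg hh)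
    (hK.integrable_exchange hf hg hh')]
  simp only [Pi.sub_apply, mul_sub]

lemma exchangeForm_le_of_ae_le (hK : IsDominatedKernel K w Φ) (hf : BddMeas f)
    (hg : MemWeightedL1 μ₊ w g) (hgv : MemWeightedL1 μ₊ v g) (hh : MemWeightedL1 μ₊ w h)
    (hv : ∀ x, 0 ≤ v x) {b : ℝ} (hb : 0 ≤ b)
    (hle : ∀ᵐ p ∂(volume : Measure (ℝ × ℝ × ℝ)).restrict Dcgedg,
      dLap f p.2.2 p.1 * (K p.1 p.2.1 p.2.2 * g p.1 * h p.2.1) ≤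
        b * (v p.1 * w p.2.1 * Φ p.2.2) * (|g p.1| * |h p.2.1|)) :
    exchangeForm K f g h ≤ b * (weightedNorm μ₊ v g * weightedNorm μ₊ w h * phiNorm0 Φ) := by
  have hdom := hK.integrable_dominant hgv hh
  have hpos : ∀ᵐ z ∂μ₊, 0 < z := ae_restrict_mem measurableSet_Ioi
  calc exchangeForm K f g h
      ≤ ∫ p in Dcgedg, b * (v p.1 * |g p.1| * (w p.2.1 * |h p.2.1| * Φ p.2.2)) := by
        refine integral_mono_ae (hK.integrable_exchange hf hg hh)
          ((hdom.mono_measure volume_restrict_Dcgedg_le).const_mul b) ?_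
        filter_upwards [hle] with p hp
        exact hp.trans_eq (by ring)
    _ ≤ ∫ p, b * (v p.1 * |g p.1| * (w p.2.1 * |h p.2.1| * Φ p.2.2))
          ∂(μ₊).prod ((μ₊).prod μ₊) := by
        refine integral_mono_measure volume_restrict_Dcgedg_le ?_ (hdom.const_mul b)
        filter_upwards [(Measure.quasiMeasurePreserving_snd.comp
          Measure.quasiMeasurePreserving_snd).ae hpos] with p hz
        exact mul_nonneg hb (mul_nonneg (mul_nonneg (hv _) (abs_nonneg _)) (mul_nonneg
          (mul_nonneg (hK.weight_nonneg _) (abs_nonneg _)) (hK.profile_nonneg hz)))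
    _ = _ := by
        rw [integral_const_mul, integral_prod_mul (fun x => v x * |g x|)
            fun q : ℝ × ℝ => w q.1 * |h q.1| * Φ q.2,
          integral_prod_mul (fun y => w y * |h y|) Φ, mul_assoc (weightedNorm _ _ _)]
        rfl

lemma exchangeForm_le_of_abs_mul_kernel_le (hK : IsDominatedKernel K w Φ) (hf : BddMeas f)
    (hg : MemWeightedL1 μ₊ w g) (hgv : MemWeightedL1 μ₊ v g) (hh : MemWeightedL1 μ₊ w h)
    (hv : ∀ x, 0 ≤ v x) {b : ℝ} (hb : 0 ≤ b)
    (hle : ∀ x y z, 0 < y → 0 < z → z ≤ x →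
      |dLap f z x| * K x y z ≤ b * (v x * w y * Φ z)) :
    exchangeForm K f g h ≤ b * (weightedNorm μ₊ v g * weightedNorm μ₊ w h * phiNorm0 Φ) := by
  refine hK.exchangeForm_le_of_ae_le hf hg hgv hh hv hb ?_
  filter_upwards [ae_Dcgedg_pos] with p ⟨hy, hz, hzx⟩
  calc dLap f p.2.2 p.1 * (K p.1 p.2.1 p.2.2 * g p.1 * h p.2.1)
      ≤ |dLap f p.2.2 p.1 * (K p.1 p.2.1 p.2.2 * g p.1 * h p.2.1)| := le_abs_self _
    _ = |dLap f p.2.2 p.1| * K p.1 p.2.1 p.2.2 * (|g p.1| * |h p.2.1|) := by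
        rw [abs_mul, abs_mul, abs_mul, abs_of_nonneg (hK.kernel_nonneg _ _ _)]
        ring
    _ ≤ _ := mul_le_mul_of_nonneg_right (hle _ _ _ hy hz hzx)
        (mul_nonneg (abs_nonneg _) (abs_nonneg _))

lemma exchangeForm_le_of_abs_le_const (hK : IsDominatedKernel K w Φ) (hfm : Measurable f) {M : ℝ}
    (hfM : ∀ x, |f x| ≤ M) (hg : MemWeightedL1 μ₊ w g) (hh : MemWeightedL1 μ₊ w h) :
    exchangeForm K f g h ≤
      4 * M * (weightedNorm μ₊ w g * weightedNorm μ₊ w h * phiNorm0 Φ) := by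
  have hM : 0 ≤ 4 * M := mul_nonneg zero_le_four ((abs_nonneg (f 0)).trans (hfM 0))
  exact hK.exchangeForm_le_of_abs_mul_kernel_le ⟨hfm, M, hfM⟩ hg hg hh hK.weight_nonneg hM
    fun x y z hy hz hzx => mul_le_mul (abs_dLap_le_of_abs_le_const hfM z x)
      (hK.kernel_le x y z hy hz hzx) (hK.kernel_nonneg x y z) hM

lemma exchangeForm_le_of_abs_le_weight (hK : IsDominatedKernel K w Φ) (hf : BddMeas f)
    (hfw : ∀ x, |f x| ≤ w x) (hg : MemWeightedL1 μ₊ (w ^ 2) g) (hh : MemWeightedL1 μ₊ w h) :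
    exchangeForm K f g h ≤
      5 * (weightedNorm μ₊ (w ^ 2) g * weightedNorm μ₊ w h * phiNorm0 Φ) :=
  hK.exchangeForm_le_of_abs_mul_kernel_le hf (hg.of_sq hK.measurable_weight hK.ae_one_le_weight)
    hg hh (fun x => sq_nonneg (w x)) (by norm_num)
    fun _ _ _ hy hz hzx => hK.abs_dLap_mul_kernel_le hfw hy hz hzx

/-- The sign test function turns the discrete Laplacian acting on `g` into the discrete Laplacian of
the weight, which costs no second power of the weight. -/
lemma exchangeForm_signTest_min_le (hK : IsDominatedKernel K w Φ) {n : ℝ} (hn : 0 ≤ n)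
    (hg : MemWeightedL1 μ₊ w g) (hh : MemWeightedL1 μ₊ w h) (hh0 : ∀ᵐ y ∂μ₊, 0 ≤ h y) :
    exchangeForm K (signTest g fun x => min (w x) n) g h ≤
      weightedNorm μ₊ w g * weightedNorm μ₊ w h * phiNorm0 Φ := by
  rw [← one_mul (weightedNorm μ₊ w g * _ * _)]
  refine hK.exchangeForm_le_of_ae_le (bddMeas_signTest hg.measurable (hK.bddMeas_min_weight hn))
    hg hg hh hK.weight_nonneg zero_le_one ?_
  filter_upwards [ae_Dcgedg_pos, ae_Dcgedg_of_ae hh0] with p ⟨hy, hz, hzx⟩ hhy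
  calc dLap (signTest g fun x => min (w x) n) p.2.2 p.1 * (K p.1 p.2.1 p.2.2 * g p.1 * h p.2.1)
      = dLap (signTest g fun x => min (w x) n) p.2.2 p.1 * g p.1 *
          (K p.1 p.2.1 p.2.2 * h p.2.1) := by ring
    _ ≤ dLap (fun x => min (w x) n) p.2.2 p.1 * |g p.1| * (K p.1 p.2.1 p.2.2 * h p.2.1) :=
        mul_le_mul_of_nonneg_right
          (dLap_signTest_mul_le (fun x => le_min (hK.weight_nonneg x) hn) _ _)
          (mul_nonneg (hK.kernel_nonneg _ _ _) hhy)
    _ = K p.1 p.2.1 p.2.2 * dLap (fun x => min (w x) n) p.2.2 p.1 * (|g p.1| * |h p.2.1|) := by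
        rw [abs_of_nonneg hhy]
        ring
    _ ≤ 1 * (w p.1 * w p.2.1 * Φ p.2.2) * (|g p.1| * |h p.2.1|) := by
        rw [one_mul]
        exact mul_le_mul_of_nonneg_right (hK.kernel_mul_dLap_min_le n hy hz hzx)
          (mul_nonneg (abs_nonneg _) (abs_nonneg _))

lemma exchangeForm_self_sub_exchangeForm_self_le (hK : IsDominatedKernel K w Φ) {n : ℝ}
    (hn : 0 ≤ n) (hg : MemWeightedL1 μ₊ w g) (hh : MemWeightedL1 μ₊ w h)
    (hh0 : ∀ᵐ y ∂μ₊, 0 ≤ h y) (hh' : MemWeightedL1 μ₊ (w ^ 2) h') :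
    exchangeForm K (signTest g fun x => min (w x) n) h h -
        exchangeForm K (signTest g fun x => min (w x) n) h' h' ≤
      (weightedNorm μ₊ w g + 4 * n * weightedNorm μ₊ w (h - h' - g)) * weightedNorm μ₊ w h *
          phiNorm0 Φ +
        5 * (weightedNorm μ₊ (w ^ 2) h' * weightedNorm μ₊ w (h - h') * phiNorm0 Φ) := by
  set f : ℝ → ℝ := signTest g fun x => min (w x) n
  have hf : BddMeas f := bddMeas_signTest hg.measurable (hK.bddMeas_min_weight hn)
  have hfle (x : ℝ) : |f x| ≤ min (w x) n :=
    abs_signTest_le (fun x => le_min (hK.weight_nonneg x) hn) x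
  have hh1 : MemWeightedL1 μ₊ w h' := hh'.of_sq hK.measurable_weight hK.ae_one_le_weight
  have hsub : MemWeightedL1 μ₊ w (h - h') := hh.sub hK.measurable_weight hh1
  have hsplit : exchangeForm K f h h - exchangeForm K f h' h' =
      exchangeForm K f g h + exchangeForm K f (h - h' - g) h + exchangeForm K f h' (h - h') := by
    rw [hK.exchangeForm_sub_left hf hsub hg hh, hK.exchangeForm_sub_left hf hh hh1 hh,
      hK.exchangeForm_sub_right hf hh1 hh hh1]
    ring
  have hself : exchangeForm K f g h ≤ weightedNorm μ₊ w g * weightedNorm μ₊ w h * phiNorm0 Φ :=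
    hK.exchangeForm_signTest_min_le hn hg hh hh0
  have herror := hK.exchangeForm_le_of_abs_le_const hf.1
    (fun x => (hfle x).trans (min_le_right _ _)) (hsub.sub hK.measurable_weight hg) hh
  have hright := hK.exchangeForm_le_of_abs_le_weight hf
    (fun x => (hfle x).trans (min_le_left _ _)) hh' hsub
  linarith

end IsDominatedKernel

end DominatedKernel

section PowerWeight

/-- The weight `x ^ (-a) + x ^ l` of `Ynorm a l`, extended evenly to a nonnegative function on `ℝ`
because test functions are defined on all of `ℝ`. -/
def powerWeight (a l x : ℝ) : ℝ := |x| ^ (-a) + |x| ^ l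

variable {a l x z : ℝ}

lemma measurable_powerWeight (a l : ℝ) : Measurable (powerWeight a l) :=
  (measurable_norm.pow_const _).add (measurable_norm.pow_const _)

lemma powerWeight_nonneg (a l x : ℝ) : 0 ≤ powerWeight a l x := by
  unfold powerWeight
  positivity

lemma powerWeight_of_pos (hx : 0 < x) : powerWeight a l x = x ^ (-a) + x ^ l := by
  rw [powerWeight, abs_of_pos hx]

lemma one_le_powerWeight (ha : 0 ≤ a) (hl : 0 ≤ l) (hx : 0 < x) : 1 ≤ powerWeight a l x := by
  rw [powerWeight_of_pos hx]
  rcases le_total x 1 with h | h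
  · exact le_add_of_le_of_nonneg
      (Real.one_le_rpow_of_pos_of_le_one_of_nonpos hx h (neg_nonpos.2 ha)) (by positivity)
  · exact le_add_of_nonneg_of_le (by positivity) (Real.one_le_rpow h hl)

lemma hatm_pos (hx : 0 < x) : 0 < hatm x := lt_min one_pos hx

lemma checkm_pos (x : ℝ) : 0 < checkm x := one_pos.trans_le (le_max_left _ _)

lemma hatm_rpow_mul_checkm_rpow_pos (hx : 0 < x) : 0 < hatm x ^ (-a) * checkm x ^ l :=
  mul_pos (Real.rpow_pos_of_pos (hatm_pos hx) _) (Real.rpow_pos_of_pos (checkm_pos x) _)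

lemma hatm_rpow_mul_checkm_rpow_le_powerWeight (hx : 0 < x) :
    hatm x ^ (-a) * checkm x ^ l ≤ powerWeight a l x := by
  rw [powerWeight_of_pos hx]
  rcases le_total x 1 with h | h
  · rw [hatm, checkm, min_eq_right h, max_eq_left h, Real.one_rpow, mul_one]
    exact le_add_of_nonneg_right (by positivity)
  · rw [hatm, checkm, min_eq_left h, max_eq_right h, Real.one_rpow, one_mul]
    exact le_add_of_nonneg_left (by positivity)

lemma hatm_rpow_neg_le_powerWeight (ha : 0 ≤ a) (hl : 0 ≤ l) (hz : 0 < z) (hzx : z ≤ x) :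
    hatm x ^ (-a) ≤ powerWeight a l z :=
  calc hatm x ^ (-a) ≤ hatm z ^ (-a) :=
        Real.rpow_le_rpow_of_nonpos (hatm_pos hz) (min_le_min_left 1 hzx) (neg_nonpos.2 ha)
    _ ≤ hatm z ^ (-a) * checkm z ^ l := le_mul_of_one_le_right
        (Real.rpow_nonneg (hatm_pos hz).le _) (Real.one_le_rpow (le_max_left _ _) hl)
    _ ≤ powerWeight a l z := hatm_rpow_mul_checkm_rpow_le_powerWeight hz

/-- As `y ^ l = (y ^ 2) ^ (l / 2)`, this follows from concavity and subadditivity of `t ^ (l / 2)`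
and the parallelogram identity. -/
lemma dLap_rpow_le (hl0 : 0 ≤ l) (hl2 : l ≤ 2) (hz : 0 ≤ z) (hzx : z ≤ x) :
    dLap (fun y => y ^ l) z x ≤ 2 * z ^ l := by
  have hsq {y : ℝ} (hy : 0 ≤ y) : y ^ l = (y ^ 2) ^ (l / 2) := by
    rw [← Real.rpow_two, ← Real.rpow_mul hy, mul_div_cancel₀ l two_ne_zero]
  have hconcave := (Real.concaveOn_rpow (p := l / 2) (by linarith) (by linarith)).2
    (mem_Ici.2 (sq_nonneg (x + z))) (mem_Ici.2 (sq_nonneg (x - z)))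
    one_half_pos.le one_half_pos.le (add_halves 1)
  have hsubadd := Real.rpow_add_le_add_rpow (p := l / 2) (sq_nonneg x) (sq_nonneg z)
    (by linarith) (by linarith)
  have hparallelogram : 1 / 2 * (x + z) ^ 2 + 1 / 2 * (x - z) ^ 2 = x ^ 2 + z ^ 2 := by ring
  simp only [smul_eq_mul, hparallelogram] at hconcave
  rw [dLap, hsq hz, hsq (hz.trans hzx), hsq (add_nonneg (hz.trans hzx) hz), hsq (sub_nonneg.2 hzx)]
  linarith

lemma dLap_powerWeight_le (ha : 0 ≤ a) (hl0 : 0 ≤ l) (hl2 : l ≤ 2) (hz : 0 < z) (hzx : z ≤ x) :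
    dLap (powerWeight a l) z x ≤ (x - z) ^ (-a) + 2 * z ^ l := by
  have hx : 0 < x := hz.trans_le hzx
  have hanti : (x + z) ^ (-a) ≤ x ^ (-a) :=
    Real.rpow_le_rpow_of_nonpos hx (by linarith) (neg_nonpos.2 ha)
  have hnonneg : 0 ≤ x ^ (-a) := by positivity
  have hpow := dLap_rpow_le hl0 hl2 hz.le hzx
  rw [dLap] at hpow
  rw [dLap, powerWeight_of_pos hx, powerWeight_of_pos (add_pos hx hz), powerWeight,
    abs_of_nonneg (sub_nonneg.2 hzx)]
  linarith

variable {g : ℝ → ℝ}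

lemma MemY.memWeightedL1 (hg : MemY a l g) : MemWeightedL1 μ₊ (powerWeight a l) g := by
  refine ⟨hg.1, hg.2.congr_fun (fun x hx => ?_) measurableSet_Ioi⟩
  rw [powerWeight_of_pos hx]

lemma sq_powerWeight_le (hx : 0 < x) :
    powerWeight a l x ^ 2 ≤ 2 * (x ^ (-(2 * a)) + x ^ (2 * l)) := by
  have hdouble (s : ℝ) : x ^ (2 * s) = (x ^ s) ^ 2 := by
    rw [mul_comm, Real.rpow_mul hx.le, Real.rpow_two]
  rw [powerWeight_of_pos hx, ← mul_neg, hdouble, hdouble]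
  exact add_sq_le

lemma ae_sq_powerWeight_mul_le (a l : ℝ) (g : ℝ → ℝ) : ∀ᵐ x ∂μ₊,
    (powerWeight a l ^ 2) x * |g x| ≤ 2 * ((x ^ (-(2 * a)) + x ^ (2 * l)) * |g x|) := by
  filter_upwards [ae_restrict_mem measurableSet_Ioi] with x hx
  rw [← mul_assoc]
  exact mul_le_mul_of_nonneg_right (sq_powerWeight_le hx) (abs_nonneg _)

lemma MemY.memWeightedL1_sq (hg : MemY (2 * a) (2 * l) g) :
    MemWeightedL1 μ₊ (powerWeight a l ^ 2) g := by
  refine ⟨hg.1, (hg.2.const_mul 2).mono' ?_ ?_⟩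
  · exact (((measurable_powerWeight a l).pow_const 2).mul hg.1.abs).aestronglyMeasurable
  · filter_upwards [ae_sq_powerWeight_mul_le a l g] with x hx
    exact (Real.norm_of_nonneg (mul_nonneg (sq_nonneg _) (abs_nonneg _))).trans_le hx

lemma MemY.weightedNorm_sq_le (hg : MemY (2 * a) (2 * l) g) :
    weightedNorm μ₊ (powerWeight a l ^ 2) g ≤ 2 * Ynorm (2 * a) (2 * l) g := by
  rw [weightedNorm, Ynorm, ← integral_const_mul]
  exact integral_mono_ae hg.memWeightedL1_sq.integrable_mul_abs (hg.2.const_mul 2)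
    (ae_sq_powerWeight_mul_le a l g)

end PowerWeight

section Domination

variable {K : ℝ → ℝ → ℝ → ℝ} {a lam : ℝ} {φ : ℝ → ℝ}

lemma nonneg_of_kernel_le (hnonneg : ∀ x y z, 0 ≤ K x y z)
    (hbound : ∀ x y z : ℝ, 0 ≤ x → 0 ≤ y → 0 ≤ z →
      K x y z ≤ hatm x ^ (-a) * hatm y ^ (-a) * checkm x ^ lam * checkm y ^ lam * φ z)
    {z : ℝ} (hz : 0 < z) : 0 ≤ φ z := by
  refine nonneg_of_mul_nonneg_right ((hnonneg z z z).trans (hbound z z z hz.le hz.le hz.le)) ?_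
  calc 0 < hatm z ^ (-a) * checkm z ^ lam * (hatm z ^ (-a) * checkm z ^ lam) :=
        mul_pos (hatm_rpow_mul_checkm_rpow_pos hz) (hatm_rpow_mul_checkm_rpow_pos hz)
    _ = _ := by ring

lemma kernel_le_powerWeight (hnonneg : ∀ x y z, 0 ≤ K x y z)
    (hbound : ∀ x y z : ℝ, 0 ≤ x → 0 ≤ y → 0 ≤ z →
      K x y z ≤ hatm x ^ (-a) * hatm y ^ (-a) * checkm x ^ lam * checkm y ^ lam * φ z)
    {x y z : ℝ} (hx : 0 < x) (hy : 0 < y) (hz : 0 < z) :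
    K x y z ≤ powerWeight a lam x * powerWeight a lam y * φ z := by
  have hφ := nonneg_of_kernel_le hnonneg hbound hz
  calc K x y z ≤ hatm x ^ (-a) * hatm y ^ (-a) * checkm x ^ lam * checkm y ^ lam * φ z :=
        hbound x y z hx.le hy.le hz.le
    _ = hatm x ^ (-a) * checkm x ^ lam * (hatm y ^ (-a) * checkm y ^ lam) * φ z := by ring
    _ ≤ _ := by
        gcongr
        · exact (hatm_rpow_mul_checkm_rpow_pos hy).le
        · exact powerWeight_nonneg a lam x
        · exact hatm_rpow_mul_checkm_rpow_le_powerWeight hx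
        · exact hatm_rpow_mul_checkm_rpow_le_powerWeight hy

lemma kernel_le_powerWeight_mul_powerWeight (ha : 0 ≤ a) (hlam : 0 ≤ lam)
    (hnonneg : ∀ x y z, 0 ≤ K x y z)
    (hbound : ∀ x y z : ℝ, 0 ≤ x → 0 ≤ y → 0 ≤ z →
      K x y z ≤ hatm x ^ (-a) * hatm y ^ (-a) * checkm x ^ lam * checkm y ^ lam * φ z)
    {x y z : ℝ} (hx : 0 < x) (hy : 0 < y) (hz : 0 < z) :
    K x y z ≤ powerWeight a lam x * powerWeight a lam y * (powerWeight a lam z * φ z) :=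
  (kernel_le_powerWeight hnonneg hbound hx hy hz).trans <| mul_le_mul_of_nonneg_left
    (le_mul_of_one_le_left (nonneg_of_kernel_le hnonneg hbound hz) (one_le_powerWeight ha hlam hz))
    (mul_nonneg (powerWeight_nonneg a lam x) (powerWeight_nonneg a lam y))

lemma SingularBound.mul_rpow_neg_le {Ca : ℝ} (hsing : SingularBound K a lam Ca φ) (hCa : 0 ≤ Ca)
    (ha : 0 < a) (hlam : 0 ≤ lam) (hnonneg : ∀ x y z, 0 ≤ K x y z) {x y z : ℝ} (hy : 0 < y)
    (hz : 0 < z) (hzx : z ≤ x) (hφ : 0 ≤ φ z) :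
    K x y z * (x - z) ^ (-a) ≤
      Ca * (powerWeight a lam x * powerWeight a lam y * (powerWeight a lam z * φ z)) := by
  have hx : 0 < x := hz.trans_le hzx
  have hmin : (x - z) ^ (-a) ≤ min 1 (x - z) ^ (-a) := by
    rcases hzx.eq_or_lt with rfl | hlt
    · simp
    · exact Real.rpow_le_rpow_of_nonpos (hatm_pos (sub_pos.2 hlt)) (min_le_right _ _)
        (neg_nonpos.2 ha.le)
  have hsplit : hatm x ^ (-(2 * a)) = hatm x ^ (-a) * hatm x ^ (-a) := by
    rw [← Real.rpow_add (hatm_pos hx)]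
    ring_nf
  calc K x y z * (x - z) ^ (-a) ≤ K x y z * min 1 (x - z) ^ (-a) :=
        mul_le_mul_of_nonneg_left hmin (hnonneg x y z)
    _ = min 1 (x - z) ^ (-a) * K x y z := mul_comm _ _
    _ ≤ Ca * hatm x ^ (-(2 * a)) * hatm y ^ (-a) * checkm x ^ lam * checkm y ^ lam * φ z :=
        hsing x y z hy.le hz.le hzx
    _ = Ca * (hatm x ^ (-a) * checkm x ^ lam * (hatm y ^ (-a) * checkm y ^ lam) *
          (hatm x ^ (-a) * φ z)) := by
        rw [hsplit]
        ring
    _ ≤ _ := by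
        have := Real.rpow_nonneg (hatm_pos hx).le (-a)
        gcongr
        · exact mul_nonneg (powerWeight_nonneg a lam x) (powerWeight_nonneg a lam y)
        · exact (hatm_rpow_mul_checkm_rpow_pos hy).le
        · exact powerWeight_nonneg a lam x
        · exact hatm_rpow_mul_checkm_rpow_le_powerWeight hx
        · exact hatm_rpow_mul_checkm_rpow_le_powerWeight hy
        · exact hatm_rpow_neg_le_powerWeight ha.le hlam hz hzx

lemma exists_kernel_mul_rpow_neg_le (ha : 0 ≤ a) (hlam : 0 ≤ lam)
    (hnonneg : ∀ x y z, 0 ≤ K x y z)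
    (hbound : ∀ x y z : ℝ, 0 ≤ x → 0 ≤ y → 0 ≤ z →
      K x y z ≤ hatm x ^ (-a) * hatm y ^ (-a) * checkm x ^ lam * checkm y ^ lam * φ z)
    (hsing : 0 < a → ∃ Ca > 0, SingularBound K a lam Ca φ) :
    ∃ C : ℝ, 0 ≤ C ∧ ∀ x y z, 0 < y → 0 < z → z ≤ x → K x y z * (x - z) ^ (-a) ≤
      C * (powerWeight a lam x * powerWeight a lam y * (powerWeight a lam z * φ z)) := by
  rcases ha.eq_or_lt with rfl | hpos
  · refine ⟨1, zero_le_one, fun x y z hy hz hzx => ?_⟩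
    rw [neg_zero, Real.rpow_zero, mul_one, one_mul]
    exact kernel_le_powerWeight_mul_powerWeight ha hlam hnonneg hbound (hz.trans_le hzx) hy hz
  · obtain ⟨Ca, hCa, hsing⟩ := hsing hpos
    exact ⟨Ca, hCa.le, fun x y z hy hz hzx => hsing.mul_rpow_neg_le hCa.le hpos hlam hnonneg hy hz
      hzx (nonneg_of_kernel_le hnonneg hbound hz)⟩

lemma exists_isDominatedKernel_powerWeight
    (hmeas : Measurable fun p : ℝ × ℝ × ℝ => K p.1 p.2.1 p.2.2) (hnonneg : ∀ x y z, 0 ≤ K x y z)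
    (hlam : lam ∈ Icc (0 : ℝ) 2) (ha : 0 ≤ a) (hφ : MemY a lam φ)
    (hbound : ∀ x y z : ℝ, 0 ≤ x → 0 ≤ y → 0 ≤ z →
      K x y z ≤ hatm x ^ (-a) * hatm y ^ (-a) * checkm x ^ lam * checkm y ^ lam * φ z)
    (hsing : 0 < a → ∃ Ca > 0, SingularBound K a lam Ca φ) :
    ∃ Φ, IsDominatedKernel K (powerWeight a lam) Φ := by
  obtain ⟨C, hC, hsub⟩ := exists_kernel_mul_rpow_neg_le ha hlam.1 hnonneg hbound hsing
  refine ⟨fun z => (C + 2) * (powerWeight a lam z * φ z), hmeas, hnonneg,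
    measurable_powerWeight a lam, powerWeight_nonneg a lam,
    fun x => one_le_powerWeight ha hlam.1, ?_, fun x y z hy hz hzx => ?_,
    fun x y z hy hz hzx => ?_⟩
  · refine (hφ.memWeightedL1.integrable_mul_abs.mono
      ((measurable_powerWeight a lam).mul hφ.1).aestronglyMeasurable ?_).const_mul _
    refine Eventually.of_forall fun z => ?_
    simp only [Pi.mul_apply, norm_mul, Real.norm_eq_abs, abs_abs, le_refl]
  · have hφz : 0 ≤ powerWeight a lam z * φ z :=
      mul_nonneg (powerWeight_nonneg a lam z) (nonneg_of_kernel_le hnonneg hbound hz)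
    exact (kernel_le_powerWeight_mul_powerWeight ha hlam.1 hnonneg hbound (hz.trans_le hzx) hy
      hz).trans (mul_le_mul_of_nonneg_left (le_mul_of_one_le_left hφz (by linarith))
        (mul_nonneg (powerWeight_nonneg a lam x) (powerWeight_nonneg a lam y)))
  · have hzw : z ^ lam ≤ powerWeight a lam z := by
      rw [powerWeight_of_pos hz]
      exact le_add_of_nonneg_left (by positivity)
    calc K x y z * dLap (powerWeight a lam) z x
        ≤ K x y z * ((x - z) ^ (-a) + 2 * z ^ lam) := mul_le_mul_of_nonneg_left
          (dLap_powerWeight_le ha hlam.1 hlam.2 hz hzx) (hnonneg x y z)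
      _ = K x y z * (x - z) ^ (-a) + 2 * (K x y z * z ^ lam) := by ring
      _ ≤ C * (powerWeight a lam x * powerWeight a lam y * (powerWeight a lam z * φ z)) +
          2 * (powerWeight a lam x * powerWeight a lam y * φ z * powerWeight a lam z) := by
        have hK := kernel_le_powerWeight hnonneg hbound (hz.trans_le hzx) hy hz
        exact add_le_add (hsub x y z hy hz hzx) (mul_le_mul_of_nonneg_left
          (mul_le_mul hK hzw (by positivity) ((hnonneg x y z).trans hK)) zero_le_two)
      _ = _ := by ring

end Domination

section IntegratedSolution

lemma integral_le_sub_mul_of_le {F : ℝ → ℝ} {s t b : ℝ} (hst : s ≤ t)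
    (hF : IntervalIntegrable F volume s t) (hle : ∀ r ∈ Icc s t, F r ≤ b) :
    ∫ r in s..t, F r ≤ (t - s) * b := by
  simpa using intervalIntegral.integral_mono_on hst hF intervalIntegrable_const hle

/-- A nonnegative solution on `[0, T]` of the weak formulation between any two times, with the norm
of weight `w ^ 2` bounded by `M`. -/
structure IsIntegratedSolution (K : ℝ → ℝ → ℝ → ℝ) (w : ℝ → ℝ) (M T : ℝ) (c : ℝ → ℝ → ℝ) :
    Prop where
  mem : ∀ t ∈ Icc 0 T, MemWeightedL1 μ₊ (w ^ 2) (c t)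
  norm_le : ∀ t ∈ Icc 0 T, weightedNorm μ₊ (w ^ 2) (c t) ≤ M
  nonneg : ∀ t ∈ Icc 0 T, ∀ᵐ x ∂μ₊, 0 ≤ c t x
  intervalIntegrable : ∀ f, BddMeas f → ∀ s ∈ Icc 0 T, ∀ t ∈ Icc 0 T,
    IntervalIntegrable (fun r => exchangeForm K f (c r) (c r)) volume s t
  integral_mul_sub : ∀ f, BddMeas f → ∀ s ∈ Icc 0 T, ∀ t ∈ Icc 0 T,
    ∫ x, f x * (c t - c s) x ∂μ₊ = ∫ r in s..t, exchangeForm K f (c r) (c r)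

variable {K : ℝ → ℝ → ℝ → ℝ} {w Φ : ℝ → ℝ} {M T : ℝ} {c d : ℝ → ℝ → ℝ} {s t r : ℝ}

/-- A modulus of continuity in time, in the norm of weight `w`, of the difference of two integrated
solutions with bound `M`; here `A` is the total mass `phiNorm0 Φ` of the dominating profile. -/
def differenceModulus (M A τ : ℝ) : ℝ := 2 * √(8 * M ^ 3 * A * τ)

lemma differenceModulus_mono (hM : 0 ≤ M) {A τ τ' : ℝ} (hA : 0 ≤ A) (hτ : τ ≤ τ') :
    differenceModulus M A τ ≤ differenceModulus M A τ' := by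
  unfold differenceModulus
  gcongr

lemma tendsto_differenceModulus_zero (M A : ℝ) :
    Tendsto (differenceModulus M A) (𝓝 0) (𝓝 0) := by
  have hcont : Continuous (differenceModulus M A) := by
    unfold differenceModulus
    fun_prop
  exact hcont.tendsto' 0 0 (by simp [differenceModulus])

namespace IsIntegratedSolution

lemma mem_weight (hc : IsIntegratedSolution K w M T c) (hK : IsDominatedKernel K w Φ)
    (ht : t ∈ Icc 0 T) : MemWeightedL1 μ₊ w (c t) :=
  (hc.mem t ht).of_sq hK.measurable_weight hK.ae_one_le_weight

lemma weightedNorm_le (hc : IsIntegratedSolution K w M T c) (hK : IsDominatedKernel K w Φ)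
    (ht : t ∈ Icc 0 T) : weightedNorm μ₊ w (c t) ≤ M :=
  (weightedNorm_mono (hc.mem_weight hK ht) (hc.mem t ht) (hK.ae_one_le_weight.mono fun _ hx =>
    le_self_pow₀ hx two_ne_zero)).trans (hc.norm_le t ht)

lemma bound_nonneg (hc : IsIntegratedSolution K w M T c) (ht : t ∈ Icc 0 T) : 0 ≤ M :=
  (weightedNorm_nonneg (fun _ => sq_nonneg _) _).trans (hc.norm_le t ht)

lemma weightedNorm_one_sub_le (hc : IsIntegratedSolution K w M T c)
    (hK : IsDominatedKernel K w Φ) (hs : s ∈ Icc 0 T) (ht : t ∈ Icc 0 T) (hst : s ≤ t) :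
    weightedNorm μ₊ 1 (c t - c s) ≤ (t - s) * (4 * (M * M * phiNorm0 Φ)) := by
  have hM := hc.bound_nonneg ht
  have hmeas : Measurable (c t - c s) := (hc.mem t ht).measurable.sub (hc.mem s hs).measurable
  have hf : BddMeas (signTest (c t - c s) 1) :=
    bddMeas_signTest hmeas ⟨measurable_one, 1, fun _ => abs_one.le⟩
  rw [← integral_signTest_mul_self, hc.integral_mul_sub _ hf s hs t ht]
  refine integral_le_sub_mul_of_le hst (hc.intervalIntegrable _ hf s hs t ht) fun r hr => ?_
  have hr' : r ∈ Icc 0 T := ⟨hs.1.trans hr.1, hr.2.trans ht.2⟩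
  have hcr := hc.weightedNorm_le hK hr'
  calc exchangeForm K (signTest (c t - c s) 1) (c r) (c r)
      ≤ 4 * 1 * (weightedNorm μ₊ w (c r) * weightedNorm μ₊ w (c r) * phiNorm0 Φ) :=
        hK.exchangeForm_le_of_abs_le_const hf.1 (abs_signTest_le fun _ => zero_le_one)
          (hc.mem_weight hK hr') (hc.mem_weight hK hr')
    _ ≤ 4 * (M * M * phiNorm0 Φ) := by
        rw [mul_one]
        have := hK.phiNorm0_nonneg
        have := weightedNorm_nonneg (μ := μ₊) hK.weight_nonneg (c r)
        gcongr

/-- Interpolation between the Lipschitz bound in `L¹` and the bound with weight `w ^ 2`. -/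
lemma weightedNorm_sub_le_sqrt (hc : IsIntegratedSolution K w M T c)
    (hK : IsDominatedKernel K w Φ) (hs : s ∈ Icc 0 T) (ht : t ∈ Icc 0 T) :
    weightedNorm μ₊ w (c t - c s) ≤ √(8 * M ^ 3 * phiNorm0 Φ * |t - s|) := by
  wlog hst : s ≤ t generalizing s t
  · rw [weightedNorm_sub_comm, abs_sub_comm]
    exact this ht hs (le_of_not_ge hst)
  have hwm := hK.measurable_weight
  have hmem : MemWeightedL1 μ₊ (w ^ 2) (c t - c s) :=
    (hc.mem t ht).sub (hwm.pow_const 2) (hc.mem s hs)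
  have hnorm : weightedNorm μ₊ (w ^ 2) (c t - c s) ≤ M + M :=
    (weightedNorm_sub_le (fun _ => sq_nonneg _) (hwm.pow_const 2) (hc.mem t ht)
      (hc.mem s hs)).trans (add_le_add (hc.norm_le t ht) (hc.norm_le s hs))
  refine Real.le_sqrt_of_sq_le ?_
  calc weightedNorm μ₊ w (c t - c s) ^ 2
      ≤ weightedNorm μ₊ 1 (c t - c s) * weightedNorm μ₊ (w ^ 2) (c t - c s) :=
        sq_weightedNorm_le hwm hK.ae_one_le_weight hmem
    _ ≤ (t - s) * (4 * (M * M * phiNorm0 Φ)) * (M + M) :=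
        mul_le_mul (hc.weightedNorm_one_sub_le hK hs ht hst) hnorm
          (weightedNorm_nonneg (fun _ => sq_nonneg _) _) (mul_nonneg (sub_nonneg.2 hst)
            (mul_nonneg zero_le_four (mul_nonneg (mul_self_nonneg M) hK.phiNorm0_nonneg)))
    _ = 8 * M ^ 3 * phiNorm0 Φ * |t - s| := by
        rw [abs_of_nonneg (sub_nonneg.2 hst)]
        ring

lemma weightedNorm_difference_sub_le (hc : IsIntegratedSolution K w M T c)
    (hd : IsIntegratedSolution K w M T d) (hK : IsDominatedKernel K w Φ) (hs : s ∈ Icc 0 T)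
    (ht : t ∈ Icc 0 T) :
    weightedNorm μ₊ w (c t - d t - (c s - d s)) ≤ differenceModulus M (phiNorm0 Φ) |t - s| := by
  have hwm := hK.measurable_weight
  rw [sub_sub_sub_comm, differenceModulus, two_mul]
  exact (weightedNorm_sub_le hK.weight_nonneg hwm ((hc.mem_weight hK ht).sub hwm
    (hc.mem_weight hK hs)) ((hd.mem_weight hK ht).sub hwm (hd.mem_weight hK hs))).trans
      (add_le_add (hc.weightedNorm_sub_le_sqrt hK hs ht) (hd.weightedNorm_sub_le_sqrt hK hs ht))

lemma weightedNorm_sq_difference_le (hc : IsIntegratedSolution K w M T c)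
    (hd : IsIntegratedSolution K w M T d) (hK : IsDominatedKernel K w Φ) (ht : t ∈ Icc 0 T) :
    weightedNorm μ₊ (w ^ 2) (c t - d t) ≤ 2 * M := by
  rw [two_mul]
  exact (weightedNorm_sub_le (fun _ => sq_nonneg _) (hK.measurable_weight.pow_const 2)
    (hc.mem t ht) (hd.mem t ht)).trans (add_le_add (hc.norm_le t ht) (hd.norm_le t ht))

lemma mem_difference (hc : IsIntegratedSolution K w M T c) (hd : IsIntegratedSolution K w M T d)
    (hK : IsDominatedKernel K w Φ) (ht : t ∈ Icc 0 T) : MemWeightedL1 μ₊ w (c t - d t) :=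
  (hc.mem_weight hK ht).sub hK.measurable_weight (hd.mem_weight hK ht)

lemma continuousOn_truncatedNorm_difference (hc : IsIntegratedSolution K w M T c)
    (hd : IsIntegratedSolution K w M T d) (hK : IsDominatedKernel K w Φ) {n : ℝ} (hn : 0 ≤ n) :
    ContinuousOn (fun t => weightedNorm μ₊ (fun x => min (w x) n) (c t - d t)) (Icc 0 T) := by
  intro s hs
  have hwm := hK.measurable_weight
  have hw := hK.weight_nonneg
  have hzero : Tendsto (fun t => differenceModulus M (phiNorm0 Φ) |t - s|) (𝓝[Icc 0 T] s) (𝓝 0) :=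
    (tendsto_differenceModulus_zero M _).comp <| Continuous.tendsto'
      (continuous_id.sub continuous_const).abs s 0 (by simp) |>.mono_left nhdsWithin_le_nhds
  refine tendsto_iff_norm_sub_tendsto_zero.2 (squeeze_zero' (Eventually.of_forall fun _ =>
    norm_nonneg _) (eventually_nhdsWithin_of_forall fun t ht => ?_) hzero)
  have hmem {r : ℝ} (hr : r ∈ Icc 0 T) := (mem_difference hc hd hK hr).min_const hwm hw hn
  have hsub := (mem_difference hc hd hK ht).sub hwm (mem_difference hc hd hK hs)
  calc ‖weightedNorm μ₊ (fun x => min (w x) n) (c t - d t) -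
        weightedNorm μ₊ (fun x => min (w x) n) (c s - d s)‖
      ≤ weightedNorm μ₊ (fun x => min (w x) n) (c t - d t - (c s - d s)) :=
        abs_weightedNorm_sub_weightedNorm_le (fun x => le_min (hw x) hn)
          (hwm.min measurable_const) (hmem ht) (hmem hs)
    _ ≤ weightedNorm μ₊ w (c t - d t - (c s - d s)) :=
        weightedNorm_mono (hsub.min_const hwm hw hn) hsub
          (Eventually.of_forall fun _ => min_le_left _ _)
    _ ≤ _ := hc.weightedNorm_difference_sub_le hd hK hs ht

lemma truncatedNorm_difference_sub_le_integral (hc : IsIntegratedSolution K w M T c)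
    (hd : IsIntegratedSolution K w M T d) (hK : IsDominatedKernel K w Φ) {n : ℝ} (hn : 0 ≤ n)
    (hs : s ∈ Icc 0 T) (ht : t ∈ Icc 0 T) :
    weightedNorm μ₊ (fun x => min (w x) n) (c t - d t) -
        weightedNorm μ₊ (fun x => min (w x) n) (c s - d s) ≤
      ∫ r in s..t, (exchangeForm K (signTest (c t - d t) fun x => min (w x) n) (c r) (c r) -
        exchangeForm K (signTest (c t - d t) fun x => min (w x) n) (d r) (d r)) := by
  have hmin := hK.bddMeas_min_weight hn
  have hmeas := (mem_difference hc hd hK ht).measurable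
  set f : ℝ → ℝ := signTest (c t - d t) fun x => min (w x) n with hfdef
  have hf : BddMeas f := bddMeas_signTest hmeas hmin
  have hint {e : ℝ → ℝ → ℝ} (he : IsIntegratedSolution K w M T e) {r : ℝ} (hr : r ∈ Icc 0 T) :
      Integrable (e r) μ₊ := (he.mem_weight hK hr).integrable hK.ae_one_le_weight
  have hdiff {r : ℝ} (hr : r ∈ Icc 0 T) : Integrable (c r - d r) μ₊ :=
    (hint hc hr).sub (hint hd hr)
  have hle : ∫ x, f x * (c s - d s) x ∂μ₊ ≤
      weightedNorm μ₊ (fun x => min (w x) n) (c s - d s) :=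
    integral_signTest_mul_le (fun x => le_min (hK.weight_nonneg x) hn) hmin hmeas (hdiff hs)
  calc weightedNorm μ₊ (fun x => min (w x) n) (c t - d t) -
        weightedNorm μ₊ (fun x => min (w x) n) (c s - d s)
      ≤ ∫ x, f x * (c t - d t) x ∂μ₊ - ∫ x, f x * (c s - d s) x ∂μ₊ := by
        rw [hfdef, integral_signTest_mul_self]
        exact sub_le_sub_left hle _
    _ = ∫ x, f x * (c t - c s) x ∂μ₊ - ∫ x, f x * (d t - d s) x ∂μ₊ := by
        rw [← integral_sub (hf.integrable_mul (hdiff ht)) (hf.integrable_mul (hdiff hs)),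
          ← integral_sub (hf.integrable_mul ((hint hc ht).sub (hint hc hs)))
            (hf.integrable_mul ((hint hd ht).sub (hint hd hs)))]
        simp only [← mul_sub, Pi.sub_apply, sub_sub_sub_comm]
    _ = _ := by
        rw [hc.integral_mul_sub f hf s hs t ht, hd.integral_mul_sub f hf s hs t ht,
          intervalIntegral.integral_sub (hc.intervalIntegrable f hf s hs t ht)
            (hd.intervalIntegrable f hf s hs t ht)]

lemma exchangeForm_signTest_difference_le (hc : IsIntegratedSolution K w M T c)
    (hd : IsIntegratedSolution K w M T d) (hK : IsDominatedKernel K w Φ) {n : ℝ} (hn : 0 ≤ n)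
    (hs : s ∈ Icc 0 T) (ht : t ∈ Icc 0 T) (hr : r ∈ Icc s t) :
    exchangeForm K (signTest (c t - d t) fun x => min (w x) n) (c r) (c r) -
        exchangeForm K (signTest (c t - d t) fun x => min (w x) n) (d r) (d r) ≤
      M * phiNorm0 Φ * (6 * weightedNorm μ₊ w (c s - d s) +
        (6 + 4 * n) * differenceModulus M (phiNorm0 Φ) (t - s)) := by
  have hM := hc.bound_nonneg ht
  have hA := hK.phiNorm0_nonneg
  have hnorm (e : ℝ → ℝ) : 0 ≤ weightedNorm μ₊ w e := weightedNorm_nonneg hK.weight_nonneg e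
  have hsub : Icc s t ⊆ Icc 0 T := Icc_subset_Icc hs.1 ht.2
  have hs' : s ∈ Icc s t := ⟨le_rfl, hr.1.trans hr.2⟩
  have ht' : t ∈ Icc s t := ⟨hr.1.trans hr.2, le_rfl⟩
  set u : ℝ := weightedNorm μ₊ w (c s - d s)
  set ω : ℝ := differenceModulus M (phiNorm0 Φ) (t - s)
  have hmod {p q : ℝ} (hp : p ∈ Icc s t) (hq : q ∈ Icc s t) :
      weightedNorm μ₊ w (c q - d q - (c p - d p)) ≤ ω :=
    (hc.weightedNorm_difference_sub_le hd hK (hsub hp) (hsub hq)).trans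
      (differenceModulus_mono hM hA (Real.dist_le_of_mem_Icc hq hp))
  have hgrow {q : ℝ} (hq : q ∈ Icc s t) : weightedNorm μ₊ w (c q - d q) ≤ u + ω := by
    have := (abs_le.1 (abs_weightedNorm_sub_weightedNorm_le hK.weight_nonneg hK.measurable_weight
      (mem_difference hc hd hK (hsub hq)) (mem_difference hc hd hK hs))).2
    linarith [hmod hs' hq]
  have hgrow_r := hgrow hr
  have hgrow_t := hgrow ht'
  have hmod_r := hmod ht' hr
  have hω : 0 ≤ ω := (hnorm _).trans hmod_r
  have hu : 0 ≤ u := hnorm _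
  calc _ ≤ (weightedNorm μ₊ w (c t - d t) +
          4 * n * weightedNorm μ₊ w (c r - d r - (c t - d t))) * weightedNorm μ₊ w (c r) *
            phiNorm0 Φ + 5 * (weightedNorm μ₊ (w ^ 2) (d r) * weightedNorm μ₊ w (c r - d r) *
              phiNorm0 Φ) :=
        hK.exchangeForm_self_sub_exchangeForm_self_le hn (mem_difference hc hd hK ht)
          (hc.mem_weight hK (hsub hr)) (hc.nonneg r (hsub hr)) (hd.mem r (hsub hr))
    _ ≤ (u + ω + 4 * n * ω) * M * phiNorm0 Φ + 5 * (M * (u + ω) * phiNorm0 Φ) := by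
        have := hnorm (c r)
        have := hnorm (c r - d r)
        gcongr
        · exact hc.weightedNorm_le hK (hsub hr)
        · exact hd.norm_le r (hsub hr)
    _ = _ := by ring

lemma truncatedNorm_difference_sub_le (hc : IsIntegratedSolution K w M T c)
    (hd : IsIntegratedSolution K w M T d) (hK : IsDominatedKernel K w Φ) {n : ℝ} (hn : 0 < n)
    (hs : s ∈ Icc 0 T) (ht : t ∈ Icc 0 T) (hst : s ≤ t) :
    weightedNorm μ₊ (fun x => min (w x) n) (c t - d t) -
        weightedNorm μ₊ (fun x => min (w x) n) (c s - d s) ≤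
      (t - s) * (6 * M * phiNorm0 Φ * weightedNorm μ₊ (fun x => min (w x) n) (c s - d s) +
        12 * M ^ 2 * phiNorm0 Φ / n +
        M * phiNorm0 Φ * (6 + 4 * n) * differenceModulus M (phiNorm0 Φ) (t - s)) := by
  have hmin := hK.bddMeas_min_weight hn.le
  have hf : BddMeas (signTest (c t - d t) fun x => min (w x) n) :=
    bddMeas_signTest (mem_difference hc hd hK ht).measurable hmin
  have hwm := hK.measurable_weight
  have htail : weightedNorm μ₊ w (c s - d s) ≤
      weightedNorm μ₊ (fun x => min (w x) n) (c s - d s) + 2 * M / n :=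
    (weightedNorm_le_min_add hwm hK.weight_nonneg hK.ae_one_le_weight
      ((hc.mem s hs).sub (hwm.pow_const 2) (hd.mem s hs)) hn).trans <| by
        gcongr
        exact hc.weightedNorm_sq_difference_le hd hK hs
  calc _ ≤ _ := truncatedNorm_difference_sub_le_integral hc hd hK hn.le hs ht
    _ ≤ (t - s) * (M * phiNorm0 Φ * (6 * weightedNorm μ₊ w (c s - d s) +
          (6 + 4 * n) * differenceModulus M (phiNorm0 Φ) (t - s))) :=
        integral_le_sub_mul_of_le hst ((hc.intervalIntegrable _ hf s hs t ht).sub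
          (hd.intervalIntegrable _ hf s hs t ht)) fun r hr =>
            exchangeForm_signTest_difference_le hc hd hK hn.le hs ht hr
    _ ≤ (t - s) * (M * phiNorm0 Φ * (6 * (weightedNorm μ₊ (fun x => min (w x) n) (c s - d s) +
          2 * M / n) + (6 + 4 * n) * differenceModulus M (phiNorm0 Φ) (t - s))) := by
        have := sub_nonneg.2 hst
        have := mul_nonneg (hc.bound_nonneg hs) hK.phiNorm0_nonneg
        gcongr
    _ = _ := by ring

lemma weightedNorm_difference_le (hc : IsIntegratedSolution K w M T c)
    (hd : IsIntegratedSolution K w M T d) (hK : IsDominatedKernel K w Φ)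
    (h0 : c 0 =ᵐ[μ₊] d 0) {n : ℝ} (hn : 0 < n) (ht : t ∈ Icc 0 T) :
    weightedNorm μ₊ w (c t - d t) ≤
      gronwallBound 0 (6 * M * phiNorm0 Φ) (12 * M ^ 2 * phiNorm0 Φ / n) t + 2 * M / n := by
  have hzero : weightedNorm μ₊ (fun x => min (w x) n) (c 0 - d 0) = 0 :=
    integral_eq_zero_of_ae <| h0.mono fun x hx => by
      simp only [Pi.sub_apply, hx, sub_self, abs_zero, mul_zero, Pi.zero_apply]
  have hω : Tendsto (fun τ => M * phiNorm0 Φ * (6 + 4 * n) * differenceModulus M (phiNorm0 Φ) τ)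
      (𝓝[>] 0) (𝓝 0) := by
    simpa using ((tendsto_differenceModulus_zero M _).const_mul _).mono_left nhdsWithin_le_nhds
  have hgronwall := le_gronwallBound_of_sub_le
    (hc.continuousOn_truncatedNorm_difference hd hK hn.le) hzero.le hω
    (fun p hp q hq => hc.truncatedNorm_difference_sub_le hd hK hn ⟨hp.1, hp.2.le⟩
      ⟨hp.1.trans hq.1.le, hq.2⟩ hq.1.le) t ht
  rw [sub_zero] at hgronwall
  have hwm := hK.measurable_weight
  calc weightedNorm μ₊ w (c t - d t)
      ≤ weightedNorm μ₊ (fun x => min (w x) n) (c t - d t) +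
          weightedNorm μ₊ (w ^ 2) (c t - d t) / n :=
        weightedNorm_le_min_add hwm hK.weight_nonneg hK.ae_one_le_weight
          ((hc.mem t ht).sub (hwm.pow_const 2) (hd.mem t ht)) hn
    _ ≤ _ := by
        gcongr
        exact hc.weightedNorm_sq_difference_le hd hK ht

theorem ae_eq (hc : IsIntegratedSolution K w M T c) (hd : IsIntegratedSolution K w M T d)
    (hK : IsDominatedKernel K w Φ) (h0 : c 0 =ᵐ[μ₊] d 0) (ht : t ∈ Icc 0 T) :
    c t =ᵐ[μ₊] d t := by
  have hinv (b : ℝ) : Tendsto (fun n : ℝ => b / n) atTop (𝓝 0) := tendsto_id.const_div_atTop b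
  have hlim : Tendsto (fun n : ℝ => gronwallBound 0 (6 * M * phiNorm0 Φ)
      (12 * M ^ 2 * phiNorm0 Φ / n) t + 2 * M / n) atTop (𝓝 0) := by
    have hgronwall := ((gronwallBound_continuous_ε 0 (6 * M * phiNorm0 Φ) t).tendsto 0).comp
      (hinv (12 * M ^ 2 * phiNorm0 Φ))
    rw [gronwallBound_ε0_δ0] at hgronwall
    simpa using hgronwall.add (hinv (2 * M))
  have hle : weightedNorm μ₊ w (c t - d t) ≤ 0 :=
    ge_of_tendsto hlim ((eventually_gt_atTop 0).mono fun _ hn =>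
      hc.weightedNorm_difference_le hd hK h0 hn ht)
  exact ae_eq_of_weightedNorm_sub_eq_zero hK.weight_nonneg hK.ae_one_le_weight
    (mem_difference hc hd hK ht) (hle.antisymm (weightedNorm_nonneg hK.weight_nonneg _))

end IsIntegratedSolution

end IntegratedSolution

section WeakSolution

variable {K : ℝ → ℝ → ℝ → ℝ} {β r a lam : ℝ} {T : ℝ≥0∞} {c₀ : ℝ → ℝ} {c d : ℝ → ℝ → ℝ}
  {f : ℝ → ℝ} {s t τ M : ℝ}

lemma MemY.integrable {g : ℝ → ℝ} (ha : 0 ≤ a) (hlam : 0 ≤ lam) (hg : MemY a lam g) :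
    Integrable g μ₊ :=
  hg.memWeightedL1.integrable <|
    (ae_restrict_mem measurableSet_Ioi).mono fun _ => one_le_powerWeight ha hlam

namespace IsWeakSolution

lemma integrable_exchange (hc : IsWeakSolution K β r T c₀ c) (ht : 0 ≤ t)
    (htT : ENNReal.ofReal t < T) (hf : BddMeas f) :
    IntegrableOn (fun p : ℝ × ℝ × ℝ × ℝ => dLap f p.2.2.2 p.2.1 *
      (K p.2.1 p.2.2.1 p.2.2.2 * c p.1 p.2.1 * c p.1 p.2.2.1)) (Ioc 0 t ×ˢ Dcgedg) := by
  obtain ⟨hfm, M, hM⟩ := hf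
  exact (hc.integ t ht htT).bdd_mul
    ((measurable_dLap hfm).comp measurable_snd).aestronglyMeasurable
    (Eventually.of_forall fun p => abs_dLap_le_of_abs_le_const hM _ _)

lemma intervalIntegrable_exchangeForm (hc : IsWeakSolution K β r T c₀ c) (ht : 0 ≤ t)
    (htT : ENNReal.ofReal t < T) (hf : BddMeas f) :
    IntervalIntegrable (fun s => exchangeForm K f (c s) (c s)) volume 0 t := by
  have hint := hc.integrable_exchange ht htT hf
  rw [IntegrableOn, Measure.volume_eq_prod, ← Measure.prod_restrict] at hint
  exact (intervalIntegrable_iff_integrableOn_Ioc_of_le ht).2 hint.integral_prod_left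

lemma integral_mul_sub_initial (hc : IsWeakSolution K β r T c₀ c) (ht : 0 ≤ t)
    (htT : ENNReal.ofReal t < T) (hf : BddMeas f) :
    ∫ x, f x * (c t - c₀) x ∂μ₊ = ∫ s in 0..t, exchangeForm K f (c s) (c s) := by
  have hint := hc.integrable_exchange ht htT hf
  rw [Measure.volume_eq_prod] at hint
  simp only [Pi.sub_apply]
  rw [hc.weak t ht htT f hf, Measure.volume_eq_prod, setIntegral_prod _ hint,
    intervalIntegral.integral_of_le ht]
  rfl

lemma integral_mul_sub (hc : IsWeakSolution K (2 * a) (2 * lam) T c₀ c) (ha : 0 ≤ a)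
    (hlam : 0 ≤ lam) (hc₀ : MemY (2 * a) (2 * lam) c₀) (hs : 0 ≤ s)
    (hsT : ENNReal.ofReal s < T) (ht : 0 ≤ t) (htT : ENNReal.ofReal t < T) (hf : BddMeas f) :
    ∫ x, f x * (c t - c s) x ∂μ₊ = ∫ q in s..t, exchangeForm K f (c q) (c q) := by
  have ha2 : 0 ≤ 2 * a := mul_nonneg zero_le_two ha
  have hlam2 : 0 ≤ 2 * lam := mul_nonneg zero_le_two hlam
  have hint {q : ℝ} (hq : 0 ≤ q) (hqT : ENNReal.ofReal q < T) :
      Integrable (fun x => f x * (c q - c₀) x) μ₊ :=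
    hf.integrable_mul (((hc.mem q hq hqT).1.integrable ha2 hlam2).sub (hc₀.integrable ha2 hlam2))
  rw [← intervalIntegral.integral_interval_sub_left (hc.intervalIntegrable_exchangeForm ht htT hf)
      (hc.intervalIntegrable_exchangeForm hs hsT hf), ← hc.integral_mul_sub_initial ht htT hf,
    ← hc.integral_mul_sub_initial hs hsT hf, ← integral_sub (hint ht htT) (hint hs hsT)]
  simp only [← mul_sub, Pi.sub_apply, sub_sub_sub_cancel_right]

lemma zero_ae_eq (hc : IsWeakSolution K (2 * a) (2 * lam) T c₀ c) (ha : 0 ≤ a)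
    (hlam : 0 ≤ lam) (hc₀ : MemY (2 * a) (2 * lam) c₀) (hT : 0 < T) : c 0 =ᵐ[μ₊] c₀ := by
  have h0 := (hc.mem 0 le_rfl (by simpa using hT)).1
  have hf : BddMeas (signTest (c 0 - c₀) 1) :=
    bddMeas_signTest (h0.1.sub hc₀.1) ⟨measurable_one, 1, fun _ => abs_one.le⟩
  have hnorm : weightedNorm μ₊ 1 (c 0 - c₀) = 0 := by
    rw [← integral_signTest_mul_self, hc.integral_mul_sub_initial le_rfl (by simpa using hT) hf,
      intervalIntegral.integral_same]
  have hmem : MemWeightedL1 μ₊ (powerWeight (2 * a) (2 * lam)) (c 0 - c₀) :=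
    h0.memWeightedL1.sub (measurable_powerWeight _ _) hc₀.memWeightedL1
  refine ae_eq_of_weightedNorm_sub_eq_zero (fun _ => zero_le_one)
    (Eventually.of_forall fun _ => le_rfl) (hmem.of_abs_le measurable_one ?_) hnorm
  filter_upwards [ae_restrict_mem measurableSet_Ioi] with x hx
  simpa using one_le_powerWeight (mul_nonneg zero_le_two ha) (mul_nonneg zero_le_two hlam) hx

lemma exists_forall_isIntegratedSolution (hc : IsWeakSolution K (2 * a) (2 * lam) T c₀ c)
    (ha : 0 ≤ a) (hlam : 0 ≤ lam) (hc₀ : MemY (2 * a) (2 * lam) c₀)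
    (hτT : ENNReal.ofReal τ < T) :
    ∃ C, ∀ M, C ≤ M → IsIntegratedSolution K (powerWeight a lam) M τ c := by
  obtain ⟨C, hC⟩ := hc.bdd
  have hlt {t : ℝ} (ht : t ∈ Icc 0 τ) : ENNReal.ofReal t < T :=
    (ENNReal.ofReal_le_ofReal ht.2).trans_lt hτT
  have hmem {t : ℝ} (ht : t ∈ Icc 0 τ) := hc.mem t ht.1 (hlt ht)
  refine ⟨2 * C, fun M hM => ⟨fun t ht => (hmem ht).1.memWeightedL1_sq, fun t ht => ?_,
    fun t ht => (hmem ht).2, fun f hf s hs t ht => ?_, fun f hf s hs t ht => ?_⟩⟩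
  · calc weightedNorm μ₊ (powerWeight a lam ^ 2) (c t)
        ≤ 2 * Ynorm (2 * a) (2 * lam) (c t) := (hmem ht).1.weightedNorm_sq_le
      _ ≤ 2 * C := by
        gcongr
        exact hC t ht.1 (hlt ht)
      _ ≤ M := hM
  · exact (hc.intervalIntegrable_exchangeForm hs.1 (hlt hs) hf).symm.trans
      (hc.intervalIntegrable_exchangeForm ht.1 (hlt ht) hf)
  · exact hc.integral_mul_sub ha hlam hc₀ hs.1 (hlt hs) ht.1 (hlt ht) hf

end IsWeakSolution

theorem cgedg_uniqueness_general
    (K : ℝ → ℝ → ℝ → ℝ) (lam a : ℝ) (φ : ℝ → ℝ)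
    (hmeas : Measurable fun p : ℝ × ℝ × ℝ => K p.1 p.2.1 p.2.2) (hnonneg : ∀ x y z, 0 ≤ K x y z)
    (hlam : lam ∈ Icc (0 : ℝ) 2) (ha : 0 ≤ a) (hφ : MemY a lam φ)
    (hbound : ∀ x y z : ℝ, 0 ≤ x → 0 ≤ y → 0 ≤ z →
      K x y z ≤ hatm x ^ (-a) * hatm y ^ (-a) * checkm x ^ lam * checkm y ^ lam * φ z)
    (hsing : 0 < a → ∃ Ca > 0, SingularBound K a lam Ca φ)
    (c₀ : ℝ → ℝ) (hc₀ : MemY (2 * a) (2 * lam) c₀) (T : ℝ≥0∞) (c d : ℝ → ℝ → ℝ)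
    (hc : IsWeakSolution K (2 * a) (2 * lam) T c₀ c)
    (hd : IsWeakSolution K (2 * a) (2 * lam) T c₀ d) :
    ∀ t : ℝ, 0 ≤ t → ENNReal.ofReal t < T → c t =ᵐ[μ₊] d t := by
  intro t ht htT
  have hT : 0 < T := bot_le.trans_lt htT
  obtain ⟨Φ, hdom⟩ := exists_isDominatedKernel_powerWeight hmeas hnonneg hlam ha hφ hbound hsing
  obtain ⟨Mc, hMc⟩ := hc.exists_forall_isIntegratedSolution ha hlam.1 hc₀ htT
  obtain ⟨Md, hMd⟩ := hd.exists_forall_isIntegratedSolution ha hlam.1 hc₀ htT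
  have hinitial : c 0 =ᵐ[μ₊] d 0 :=
    (hc.zero_ae_eq ha hlam.1 hc₀ hT).trans (hd.zero_ae_eq ha hlam.1 hc₀ hT).symm
  exact (hMc _ (le_max_left Mc Md)).ae_eq (hMd _ (le_max_right Mc Md)) hdom hinitial
    (right_mem_Icc.2 ht)

end WeakSolution

/-- Uniqueness for CGEDG. -/
theorem cgedg_uniqueness
    (K : ℝ → ℝ → ℝ → ℝ) (lam a : ℝ) (φ : ℝ → ℝ)
    (hK : IsKernel K) (hlam : lam ∈ Icc (1:ℝ) 2) (ha : 0 ≤ a)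
    (hφ : MemYplus a lam φ)
    (hbound : ∀ x y z : ℝ, 0 ≤ x → 0 ≤ y → 0 ≤ z →
      K x y z ≤ hatm x ^ (-a) * hatm y ^ (-a) * checkm x ^ lam * checkm y ^ lam * φ z)
    (hsing : 0 < a → ∃ Ca > 0, SingularBound K a lam Ca φ)
    (c₀ : ℝ → ℝ) (hc₀ : MemYplus (2*a) (2*lam) c₀)
    (T : ℝ≥0∞) (hT : 0 < T)
    (c d : ℝ → ℝ → ℝ)
    (hc : IsWeakSolution K (2*a) (2*lam) T c₀ c)
    (hd : IsWeakSolution K (2*a) (2*lam) T c₀ d) :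
    ∀ t : ℝ, 0 ≤ t → ENNReal.ofReal t < T →
      c t =ᵐ[volume.restrict (Ioi (0:ℝ))] d t :=
  cgedg_uniqueness_general K lam a φ hK.meas hK.nonneg (Icc_subset_Icc_left zero_le_one hlam) ha
    hφ.1 hbound hsing c₀ hc₀.1 T c d hc hd
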